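/- arXiv:1705.00560 — 2 statements merged into one kernel-verified Lean document; each statement's English description precedes it below -/
import Mathlib

section
/- Let μ₁, μ₂ be compactly supported Borel probability measures on ℝ² and let 0 < c₀ < C₀ be constants such that c₀ ≤ |x| ≤ C₀, c₀ ≤ |y| ≤ C₀ and c₀ ≤ |x·y^⊥| ≤ C₀ for all x in the support of μ₁ and y in the support of μ₂. Let ψ be a smooth compactly supported function on SL₂(ℝ) and λ a right Haar measure on SL₂(ℝ). Then there exists K ≥ 1 such that for every N ∈ ℕ there is a constant C_N with the following property: for all ξ, η ∈ ℝ² with max(|ξ|,|η|) ≥ 1 for which it is NOT the case that ( K^{−1}|η| ≤ |ξ| ≤ K|η| and |ξ·η^⊥| ≥ K^{−1} max(|ξ|,|η|)² ), one has | ∫_{SL₂(ℝ)} μ̂₁(gξ) μ̂₂(gη) ψ(g) dλ(g) | ≤ C_N max(|ξ|,|η|)^{−N}. -/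
open MeasureTheory Metric
open scoped ENNReal RealInnerProductSpace

noncomputable instance matrixMeasurableSpace (m n : Type*) :
    MeasurableSpace (Matrix m n ℝ) := borel _

instance matrixBorelSpace (m n : Type*) : BorelSpace (Matrix m n ℝ) := ⟨rfl⟩

noncomputable instance matrixNormedAddCommGroup (m n : Type*) [Fintype m] [Fintype n] :
    NormedAddCommGroup (Matrix m n ℝ) := Matrix.normedAddCommGroup

noncomputable instance matrixNormedSpace (m n : Type*) [Fintype m] [Fintype n] :
    NormedSpace ℝ (Matrix m n ℝ) := Matrix.normedSpace

noncomputable instance SL2MeasurableSpace :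
    MeasurableSpace (Matrix.SpecialLinearGroup (Fin 2) ℝ) :=
  inferInstanceAs (MeasurableSpace {A : Matrix (Fin 2) (Fin 2) ℝ // A.det = 1})

instance SL2TopologicalSpace :
    TopologicalSpace (Matrix.SpecialLinearGroup (Fin 2) ℝ) :=
  inferInstanceAs (TopologicalSpace {A : Matrix (Fin 2) (Fin 2) ℝ // A.det = 1})

/-- The Fourier transform `μ̂(ξ) = ∫ e^{-2πi x·ξ} dμ(x)` of a finite Borel measure on `ℝ²`. -/
noncomputable def measureFT (μ : Measure (EuclideanSpace ℝ (Fin 2)))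
    (ξ : EuclideanSpace ℝ (Fin 2)) : ℂ :=
  ∫ x, Complex.exp (((-2 * Real.pi * ⟪x, ξ⟫ : ℝ) : ℂ) * Complex.I) ∂μ

/-! After exchanging the integrals, the oscillatory integral is an average over `(x, y)` of
integrals over `SL₂(ℝ)` with phase `tr (g A)`, where `A = ξ xᵀ + η yᵀ`. Right translation by the
unipotent matrices `1 + t u vᵀ`, `v · u = 0`, preserves the measure, so the vector fields
`g ↦ g u vᵀ` are divergence-free and may be used to integrate by parts. If the phase is critical
at `g` in all these directions, then `A g` is scalar, so `A` is a multiple of `adj g` and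
`‖A‖² = ‖adj g‖² |det A|`. Now `‖A‖` is comparable with `R = max(|ξ|, |η|)`, while `det A` is the
product of the determinants of `(ξ, η)` and `(x, y)` and hence small compared with `R²` for the
excluded pairs `(ξ, η)`. The phase therefore has no critical point on the support of the
amplitude, and `N` integrations by parts gain `R⁻ᴺ`, uniformly over the compact set of normalized
matrices `A`. -/

open Real Set Function
open scoped ContDiff Matrix FourierTransform

section DerivAlong

variable {V G : Type*} [NormedAddCommGroup V] [NormedSpace ℝ V] [NormedAddCommGroup G]
  [NormedSpace ℝ G]

/-- The derivative `X f` of a function `f` along a vector field `X`. -/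
noncomputable def derivAlong (X : V → V) (f : V → G) (p : V) : G := fderiv ℝ f p (X p)

theorem tsupport_derivAlong_subset (X : V → V) (f : V → G) :
    tsupport (derivAlong X f) ⊆ tsupport f := by
  refine closure_minimal (fun p hp => ?_) (isClosed_tsupport f)
  refine support_fderiv_subset ℝ fun h => hp ?_
  rw [derivAlong, h, zero_apply]

theorem continuous_derivAlong {X : V → V} {f : V → G} (hX : Continuous X)
    (hf : ContDiff ℝ 1 f) : Continuous (derivAlong X f) :=
  (hf.continuous_fderiv one_ne_zero).clm_apply hX

theorem contDiff_infty_derivAlong {X : V → V} {f : V → G} (hX : ContDiff ℝ ∞ X)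
    (hf : ContDiff ℝ ∞ f) : ContDiff ℝ ∞ (derivAlong X f) :=
  (hf.fderiv_right (m := ∞) (by simp)).clm_apply hX

theorem hasCompactSupport_derivAlong (X : V → V) {f : V → G} (hf : HasCompactSupport f) :
    HasCompactSupport (derivAlong X f) :=
  hf.isCompact.of_isClosed_subset (isClosed_tsupport _) (tsupport_derivAlong_subset X f)

theorem derivAlong_const_mul (X : V → V) (c : ℝ) {f : V → ℝ} {p : V}
    (hf : DifferentiableAt ℝ f p) :
    derivAlong X (fun q => c * f q) p = c * derivAlong X f p := by
  rw [derivAlong, derivAlong, fderiv_const_mul hf, smul_apply, smul_eq_mul]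

theorem derivAlong_mul (X : V → V) {f g : V → ℂ} {p : V} (hf : DifferentiableAt ℝ f p)
    (hg : DifferentiableAt ℝ g p) :
    derivAlong X (fun q => f q * g q) p = derivAlong X f p * g p + f p * derivAlong X g p := by
  rw [derivAlong, derivAlong, derivAlong, fderiv_fun_mul hf hg]
  simp only [add_apply, smul_apply, smul_eq_mul]
  ring

theorem derivAlong_fourierChar (X : V → V) {φ : V → ℝ} {p : V} (hφ : DifferentiableAt ℝ φ p) :
    derivAlong X (fun q => (𝐞 (φ q) : ℂ)) p
      = 2 * π * Complex.I * derivAlong X φ p * 𝐞 (φ p) := by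
  have hderiv : HasFDerivAt (fun q => (𝐞 (φ q) : ℂ)) _ p :=
    (hasDerivAt_fourierChar (φ p)).hasFDerivAt.comp p hφ.hasFDerivAt
  rw [derivAlong, hderiv.fderiv, ContinuousLinearMap.comp_apply,
    ContinuousLinearMap.toSpanSingleton_apply, Complex.real_smul, derivAlong]
  ring

end DerivAlong

theorem contDiff_fourierChar {n : ℕ∞ω} : ContDiff ℝ n fun t : ℝ => (𝐞 t : ℂ) := by
  simp only [fourierChar_apply]
  exact ((Complex.ofRealCLM.contDiff.comp (contDiff_const.mul contDiff_id)).mul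
    contDiff_const).cexp

section DivergenceFree

variable {V : Type*} [NormedAddCommGroup V] [NormedSpace ℝ V] [MeasurableSpace V]

/-- A vector field `X` is divergence-free with respect to a measure `ν` if derivatives along `X`
integrate to zero against `ν`; the divergence itself is not required to exist. -/
def IsDivergenceFree (ν : Measure V) (X : V → V) : Prop :=
  ∀ ⦃f : V → ℂ⦄, ContDiff ℝ 1 f → HasCompactSupport f → ∫ p, derivAlong X f p ∂ν = 0

variable [BorelSpace V] {ν : Measure V} [IsFiniteMeasureOnCompacts ν] {X : V → V}

theorem isDivergenceFree_of_measurePreserving_flow (θ : Flow ℝ V) (hX : Continuous X)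
    (hθX : ∀ t p, HasDerivAt (fun s => θ s p) (X (θ t p)) t)
    (hθν : ∀ t, MeasurePreserving (θ t) ν ν) : IsDivergenceFree ν X := by
  intro f hf hfc
  have hDf : Continuous (derivAlong X f) := continuous_derivAlong hX hf
  obtain ⟨C, hC⟩ := (hasCompactSupport_derivAlong X hfc).exists_bound_of_continuous hDf
  set S : Set V := (fun q : ℝ × V => θ (-q.1) q.2) '' (Icc (-1) 1 ×ˢ tsupport f)
  have hS : IsCompact S := (isCompact_Icc.prod hfc.isCompact).image (by fun_prop)
  have hbound : ∀ p, ∀ t ∈ Icc (-1 : ℝ) 1,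
      ‖derivAlong X f (θ t p)‖ ≤ S.indicator (fun _ => C) p := by
    intro p t ht
    by_cases hp : θ t p ∈ tsupport f
    · have hpS : p ∈ S := ⟨(t, θ t p), ⟨ht, hp⟩, by simp [← θ.map_add]⟩
      rw [indicator_of_mem hpS]
      exact hC _
    · rw [image_eq_zero_of_notMem_tsupport fun h => hp (tsupport_derivAlong_subset X f h),
        norm_zero]
      exact indicator_nonneg (fun _ _ => (norm_nonneg _).trans (hC 0)) p
  have hderiv := (hasDerivAt_integral_of_dominated_loc_of_deriv_le (μ := ν) (𝕜 := ℝ)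
    (x₀ := (0 : ℝ)) (F := fun t p => f (θ t p)) (F' := fun t p => derivAlong X f (θ t p))
    (s := Icc (-1) 1) (bound := S.indicator fun _ => C)
    (Icc_mem_nhds (by norm_num) (by norm_num))
    (.of_forall fun t => (hf.continuous.comp (by fun_prop)).aestronglyMeasurable)
    (by simpa using hf.continuous.integrable_of_hasCompactSupport hfc)
    (hDf.comp (by fun_prop)).aestronglyMeasurable
    (.of_forall hbound)
    ((integrableOn_const hS.measure_lt_top.ne).integrable_indicator hS.measurableSet)
    (.of_forall fun p t _ =>
      (hf.differentiable one_ne_zero _).hasFDerivAt.comp_hasDerivAt t (hθX t p))).2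
  have hconst : ∀ t, ∫ p, f (θ t p) ∂ν = ∫ p, f p ∂ν := fun t => by
    rw [← integral_map (hθν t).aemeasurable hf.continuous.aestronglyMeasurable, (hθν t).map_eq]
  simp only [hconst, θ.map_zero_apply] at hderiv
  exact hderiv.unique (hasDerivAt_const _ _)

theorem IsDivergenceFree.integral_derivAlong_mul_eq_neg (hXν : IsDivergenceFree ν X)
    (hX : Continuous X) {v w : V → ℂ} (hv : ContDiff ℝ 1 v) (hvc : HasCompactSupport v)
    (hw : ContDiff ℝ 1 w) :
    ∫ p, derivAlong X v p * w p ∂ν = -∫ p, v p * derivAlong X w p ∂ν := by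
  have hzero := hXν (hv.mul hw) hvc.mul_right
  simp only [derivAlong_mul X (hv.differentiable one_ne_zero _)
    (hw.differentiable one_ne_zero _)] at hzero
  rw [integral_add] at hzero
  · exact eq_neg_of_add_eq_zero_left hzero
  · exact ((continuous_derivAlong hX hv).mul hw.continuous).integrable_of_hasCompactSupport
      (hasCompactSupport_derivAlong X hvc).mul_right
  · exact (hv.continuous.mul (continuous_derivAlong hX hw)).integrable_of_hasCompactSupport
      hvc.mul_right

theorem IsDivergenceFree.integral_derivAlong_mul_fourierChar (hXν : IsDivergenceFree ν X)
    (hX : Continuous X) {φ : V → ℝ} (hφ : ContDiff ℝ 1 φ) {v : V → ℂ} (hv : ContDiff ℝ 1 v)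
    (hvc : HasCompactSupport v) (R : ℝ) :
    ∫ p, derivAlong X v p * 𝐞 (R * φ p) ∂ν
      = -(2 * π * R * Complex.I) * ∫ p, derivAlong X φ p * v p * 𝐞 (R * φ p) ∂ν := by
  rw [hXν.integral_derivAlong_mul_eq_neg hX (w := fun p => (𝐞 (R * φ p) : ℂ)) hv hvc
    (contDiff_fourierChar.comp (contDiff_const.mul hφ)), neg_mul, ← integral_const_mul]
  congr 2 with p
  have hφp : DifferentiableAt ℝ φ p := hφ.differentiable one_ne_zero p
  rw [derivAlong_fourierChar X (hφp.const_mul R), derivAlong_const_mul X R hφp]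
  push_cast
  ring

end DivergenceFree

section NonstationaryPhase

variable {V ι : Type*} [NormedAddCommGroup V] [NormedSpace ℝ V] [Fintype ι]

/-- The sum of the squares of the derivatives of `φ` along the vector fields `X i`; it vanishes
exactly at the points where `φ` is critical in all these directions. -/
noncomputable def sumSqDerivAlong (X : ι → V → V) (φ : V → ℝ) (p : V) : ℝ :=
  ∑ i, derivAlong (X i) φ p ^ 2

/-- The share `(Xᵢφ / ∑ⱼ (Xⱼφ)²) u` of the amplitude `u` from which `u` is recovered as
`∑ᵢ (Xᵢφ) uᵢ` wherever `φ` is not critical. -/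
noncomputable def amplitudeShare (X : ι → V → V) (φ : V → ℝ) (u : V → ℂ) (i : ι) (p : V) : ℂ :=
  (derivAlong (X i) φ p / sumSqDerivAlong X φ p) • u p

/-- The transposed operator of the method of non-stationary phase: integration by parts turns the
amplitude `u` into `R⁻¹` times this function, up to a numerical factor. -/
noncomputable def partsTransform (X : ι → V → V) (φ : V → ℝ) (u : V → ℂ) (p : V) : ℂ :=
  ∑ i, derivAlong (X i) (amplitudeShare X φ u i) p

variable {X : ι → V → V} {φ : V → ℝ} {u : V → ℂ}

theorem sumSqDerivAlong_ne_zero_iff {p : V} :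
    sumSqDerivAlong X φ p ≠ 0 ↔ ∃ i, derivAlong (X i) φ p ≠ 0 := by
  simp [sumSqDerivAlong, Finset.sum_eq_zero_iff_of_nonneg, sq_nonneg]

theorem contDiff_infty_sumSqDerivAlong (hX : ∀ i, ContDiff ℝ ∞ (X i)) (hφ : ContDiff ℝ ∞ φ) :
    ContDiff ℝ ∞ (sumSqDerivAlong X φ) :=
  ContDiff.sum fun i _ => (contDiff_infty_derivAlong (hX i) hφ).pow 2

theorem tsupport_amplitudeShare_subset (i : ι) :
    tsupport (amplitudeShare X φ u i) ⊆ tsupport u :=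
  tsupport_smul_subset_right _ _

theorem contDiff_infty_amplitudeShare (hX : ∀ i, ContDiff ℝ ∞ (X i)) (hφ : ContDiff ℝ ∞ φ)
    (hu : ContDiff ℝ ∞ u) (hne : ∀ p ∈ tsupport u, sumSqDerivAlong X φ p ≠ 0) (i : ι) :
    ContDiff ℝ ∞ (amplitudeShare X φ u i) :=
  (contMDiff_of_tsupport fun p hp =>
    (((contDiff_infty_derivAlong (hX i) hφ).contDiffAt.div
      (contDiff_infty_sumSqDerivAlong hX hφ).contDiffAt
      (hne p (tsupport_amplitudeShare_subset i hp))).smul hu.contDiffAt).contMDiffAt).contDiff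

theorem sum_derivAlong_mul_amplitudeShare
    (hne : ∀ p ∈ tsupport u, sumSqDerivAlong X φ p ≠ 0) (p : V) :
    ∑ i, derivAlong (X i) φ p * amplitudeShare X φ u i p = u p := by
  by_cases hp : p ∈ tsupport u
  · have hsum : ∀ i, derivAlong (X i) φ p * amplitudeShare X φ u i p
        = (derivAlong (X i) φ p ^ 2 / sumSqDerivAlong X φ p) • u p := fun i => by
      simp only [amplitudeShare, Complex.real_smul]
      push_cast
      ring
    simp only [hsum]
    rw [← Finset.sum_smul, ← Finset.sum_div]
    exact (congrArg (· • u p) (div_self (hne p hp))).trans (one_smul ℝ _)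
  · simp [amplitudeShare, image_eq_zero_of_notMem_tsupport hp]

theorem tsupport_partsTransform_subset : tsupport (partsTransform X φ u) ⊆ tsupport u := by
  refine closure_minimal (fun p hp => ?_) (isClosed_tsupport u)
  obtain ⟨i, -, hi⟩ := Finset.exists_ne_zero_of_sum_ne_zero hp
  exact tsupport_amplitudeShare_subset i (tsupport_derivAlong_subset _ _ (subset_tsupport _ hi))

theorem contDiff_infty_partsTransform (hX : ∀ i, ContDiff ℝ ∞ (X i)) (hφ : ContDiff ℝ ∞ φ)
    (hu : ContDiff ℝ ∞ u) (hne : ∀ p ∈ tsupport u, sumSqDerivAlong X φ p ≠ 0) :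
    ContDiff ℝ ∞ (partsTransform X φ u) :=
  ContDiff.sum fun i _ =>
    contDiff_infty_derivAlong (hX i) (contDiff_infty_amplitudeShare hX hφ hu hne i)

variable [MeasurableSpace V] [BorelSpace V]

theorem integral_partsTransform_mul_fourierChar {ν : Measure V} [IsFiniteMeasureOnCompacts ν]
    (hXν : ∀ i, IsDivergenceFree ν (X i)) (hX : ∀ i, ContDiff ℝ ∞ (X i)) (hφ : ContDiff ℝ ∞ φ)
    (hu : ContDiff ℝ ∞ u) (huc : HasCompactSupport u)
    (hne : ∀ p ∈ tsupport u, sumSqDerivAlong X φ p ≠ 0) (R : ℝ) :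
    ∫ p, partsTransform X φ u p * 𝐞 (R * φ p) ∂ν
      = -(2 * π * R * Complex.I) * ∫ p, u p * 𝐞 (R * φ p) ∂ν := by
  have hv i : ContDiff ℝ 1 (amplitudeShare X φ u i) :=
    (contDiff_infty_amplitudeShare hX hφ hu hne i).of_le (by simp)
  have hvc i : HasCompactSupport (amplitudeShare X φ u i) :=
    huc.of_isClosed_subset (isClosed_tsupport _) (tsupport_amplitudeShare_subset i)
  have hφ1 : ContDiff ℝ 1 φ := hφ.of_le (by simp)
  have hosc : Continuous fun p => (𝐞 (R * φ p) : ℂ) :=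
    (contDiff_fourierChar (n := 0)).continuous.comp (by fun_prop)
  simp only [partsTransform, ← sum_derivAlong_mul_amplitudeShare hne, Finset.sum_mul]
  rw [integral_finsetSum, integral_finsetSum, Finset.mul_sum]
  · exact Finset.sum_congr rfl fun i _ =>
      (hXν i).integral_derivAlong_mul_fourierChar (hX i).continuous hφ1 (hv i) (hvc i) R
  · exact fun i _ => (((Complex.continuous_ofReal.comp
      (continuous_derivAlong (hX i).continuous hφ1)).mul (hv i).continuous).mul
      hosc).integrable_of_hasCompactSupport (hvc i).mul_left.mul_right
  · exact fun i _ => ((continuous_derivAlong (hX i).continuous (hv i)).mul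
      hosc).integrable_of_hasCompactSupport (hasCompactSupport_derivAlong _ (hvc i)).mul_right

theorem exists_pow_mul_norm_integral_mul_fourierChar_le
    (hX : ∀ i, ContDiff ℝ ∞ (X i)) (hφ : ContDiff ℝ ∞ φ) (hu : ContDiff ℝ ∞ u)
    (huc : HasCompactSupport u) (hne : ∀ p ∈ tsupport u, sumSqDerivAlong X φ p ≠ 0) (N : ℕ) :
    ∃ C : ℝ, ∀ (R : ℝ) (ν : Measure V) [IsFiniteMeasureOnCompacts ν],
      (∀ i, IsDivergenceFree ν (X i)) →
        |R| ^ N * ‖∫ p, u p * 𝐞 (R * φ p) ∂ν‖ ≤ C * ν.real (tsupport u) := by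
  induction N generalizing u with
  | zero =>
    obtain ⟨C, hC⟩ := huc.exists_bound_of_continuous hu.continuous
    refine ⟨C, fun R ν _ _ => ?_⟩
    rw [pow_zero, one_mul, ← setIntegral_eq_integral_of_forall_compl_eq_zero (s := tsupport u)]
    · refine norm_setIntegral_le_of_norm_le_const huc.isCompact.measure_lt_top fun p _ => ?_
      rw [norm_mul, Circle.norm_coe, mul_one]
      exact hC p
    · intro p hp
      rw [image_eq_zero_of_notMem_tsupport hp, zero_mul]
  | succ N ih =>
    obtain ⟨C, hC⟩ := ih (contDiff_infty_partsTransform hX hφ hu hne)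
      (huc.of_isClosed_subset (isClosed_tsupport _) tsupport_partsTransform_subset)
      fun p hp => hne p (tsupport_partsTransform_subset hp)
    refine ⟨|C|, fun R ν _ hXν => ?_⟩
    have hparts : ‖∫ p, partsTransform X φ u p * 𝐞 (R * φ p) ∂ν‖
        = 2 * π * |R| * ‖∫ p, u p * 𝐞 (R * φ p) ∂ν‖ := by
      rw [integral_partsTransform_mul_fourierChar hXν hX hφ hu huc hne, norm_mul]
      simp [abs_of_pos pi_pos]
    calc |R| ^ (N + 1) * ‖∫ p, u p * 𝐞 (R * φ p) ∂ν‖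
        ≤ (2 * π) * (|R| ^ (N + 1) * ‖∫ p, u p * 𝐞 (R * φ p) ∂ν‖) :=
          le_mul_of_one_le_left (by positivity) (by linarith [pi_gt_three])
      _ = |R| ^ N * ‖∫ p, partsTransform X φ u p * 𝐞 (R * φ p) ∂ν‖ := by rw [hparts]; ring
      _ ≤ C * ν.real (tsupport (partsTransform X φ u)) := hC R ν hXν
      _ ≤ |C| * ν.real (tsupport u) := by
          gcongr
          · exact le_abs_self C
          · exact huc.isCompact.measure_lt_top.ne
          · exact tsupport_partsTransform_subset

end NonstationaryPhase

section CompactFamilies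

theorem isFiniteMeasureOnCompacts_map_prodMk {E F : Type*} [TopologicalSpace E]
    [MeasurableSpace E] [TopologicalSpace F] [MeasurableSpace F]
    [OpensMeasurableSpace (F × E)] [T2Space (F × E)] {ν : Measure E}
    [IsFiniteMeasureOnCompacts ν] (A : F) : IsFiniteMeasureOnCompacts (ν.map (Prod.mk A)) := by
  refine ⟨fun K hK => ?_⟩
  rw [Measure.map_apply measurable_prodMk_left hK.measurableSet]
  exact (measure_mono (t := Prod.snd '' K) fun g hg => ⟨(A, g), hg, rfl⟩).trans_lt
    (hK.image continuous_snd).measure_lt_top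

open scoped Manifold in
theorem exists_contDiff_hasCompactSupport_eq_one {V : Type*} [NormedAddCommGroup V]
    [NormedSpace ℝ V] [FiniteDimensional ℝ V] {K U : Set V} (hK : IsCompact K) (hU : IsOpen U)
    (hKU : K ⊆ U) :
    ∃ χ : V → ℝ, ContDiff ℝ ∞ χ ∧ HasCompactSupport χ ∧ tsupport χ ⊆ U ∧ EqOn χ 1 K := by
  have : ProperSpace V := FiniteDimensional.proper_real V
  obtain ⟨L, hL, hKL, hLU⟩ := exists_compact_between hK hU hKU
  obtain ⟨χ, hχ1, hχ0, -⟩ := exists_contMDiffMap_one_nhds_of_subset_interior 𝓘(ℝ, V)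
    (n := (⊤ : ℕ∞)) hK.isClosed hKL
  have hχL : tsupport χ ⊆ L :=
    closure_minimal (fun p hp => by_contra fun h => hp (hχ0 p h)) hL.isClosed
  exact ⟨χ, χ.contMDiff.contDiff, hL.of_isClosed_subset (isClosed_tsupport _) hχL,
    hχL.trans hLU, fun p hp => hχ1.self_of_nhdsSet p hp⟩

variable {E F ι : Type*} [NormedAddCommGroup E] [NormedSpace ℝ E] [NormedAddCommGroup F]
  [NormedSpace ℝ F]

theorem exists_finset_forall_mem_exists_derivAlong_ne_zero {X : ι → E → E} {φ : E → ℝ}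
    (hX : ∀ i, Continuous (X i)) (hφ : ContDiff ℝ 1 φ) {K : Set E} (hK : IsCompact K)
    (hne : ∀ p ∈ K, ∃ i, derivAlong (X i) φ p ≠ 0) :
    ∃ s : Finset ι, ∀ p ∈ K, ∃ i : s, derivAlong (X i) φ p ≠ 0 := by
  obtain ⟨s, hs⟩ := hK.elim_finite_subcover (fun i => {p | derivAlong (X i) φ p ≠ 0})
    (fun i => isOpen_ne_fun (continuous_derivAlong (hX i) hφ) continuous_const)
    fun p hp => mem_iUnion.2 (hne p hp)
  refine ⟨s, fun p hp => ?_⟩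
  obtain ⟨i, his, hi⟩ := mem_iUnion₂.1 (hs hp)
  exact ⟨⟨i, his⟩, hi⟩

theorem exists_pow_mul_norm_integral_mul_fourierChar_le_of_isCompact [FiniteDimensional ℝ E]
    [MeasurableSpace E] [BorelSpace E] {X : ι → E → E} {φ : E → ℝ} {u : E → ℂ}
    (hX : ∀ i, ContDiff ℝ ∞ (X i)) (hφ : ContDiff ℝ ∞ φ) (hu : ContDiff ℝ ∞ u) {K : Set E}
    (hK : IsCompact K) (hne : ∀ p ∈ K, ∃ i, derivAlong (X i) φ p ≠ 0) (N : ℕ) :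
    ∃ (C : ℝ) (S : Set E), IsCompact S ∧
      ∀ (R : ℝ) (ν : Measure E) [IsFiniteMeasureOnCompacts ν],
        (∀ i, IsDivergenceFree ν (X i)) → (∀ᵐ p ∂ν, u p ≠ 0 → p ∈ K) →
          |R| ^ N * ‖∫ p, u p * 𝐞 (R * φ p) ∂ν‖ ≤ C * ν.real S := by
  obtain ⟨s, hs⟩ := exists_finset_forall_mem_exists_derivAlong_ne_zero
    (fun i => (hX i).continuous) (hφ.of_le (by simp)) hK hne
  set Y : s → E → E := fun i => X i
  have hY : ∀ i, ContDiff ℝ ∞ (Y i) := fun i => hX i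
  obtain ⟨χ, hχ, hχc, hχt, hχK⟩ := exists_contDiff_hasCompactSupport_eq_one hK
    (isOpen_ne_fun (contDiff_infty_sumSqDerivAlong hY hφ).continuous continuous_const)
    fun p hp => sumSqDerivAlong_ne_zero_iff.2 (hs p hp)
  obtain ⟨C, hC⟩ := exists_pow_mul_norm_integral_mul_fourierChar_le hY hφ (hχ.smul hu)
    hχc.smul_right (fun p hp => hχt (tsupport_smul_subset_left _ _ hp)) N
  refine ⟨C, _, hχc.smul_right (f' := u), fun R ν _ hXν hνK => ?_⟩
  have hcongr : ∫ p, u p * 𝐞 (R * φ p) ∂ν = ∫ p, (χ • u) p * 𝐞 (R * φ p) ∂ν := by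
    refine integral_congr_ae ?_
    filter_upwards [hνK] with p hp
    by_cases hup : u p = 0
    · simp [hup]
    · simp [hχK (hp hup)]
  rw [hcongr]
  exact hC R ν fun i => hXν i

theorem derivAlong_prodMk {G : Type*} [NormedAddCommGroup G] [NormedSpace ℝ G] {f : F × E → G}
    {A : F} {g : E} (X : E → E) (hf : DifferentiableAt ℝ f (A, g)) :
    derivAlong (fun p : F × E => (0, X p.2)) f (A, g) = derivAlong X (fun h => f (A, h)) g := by
  have hslice : HasFDerivAt (fun h => f (A, h)) _ g :=
    hf.hasFDerivAt.comp g (hasFDerivAt_prodMk_right A g)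
  simp [derivAlong, hslice.fderiv]

variable [MeasurableSpace E] [BorelSpace E] [FiniteDimensional ℝ E]

theorem IsDivergenceFree.map_prodMk [MeasurableSpace F] [BorelSpace F] {ν : Measure E}
    {X : E → E} (hXν : IsDivergenceFree ν X) (hX : Continuous X) (A : F) :
    IsDivergenceFree (ν.map (Prod.mk A)) fun p : F × E => (0, X p.2) := by
  have := FiniteDimensional.proper_real E
  intro f hf hfc
  have hlift : Continuous fun p : F × E => ((0 : F), X p.2) := by fun_prop
  rw [integral_map measurable_prodMk_left.aemeasurable
    (continuous_derivAlong hlift hf).aestronglyMeasurable]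
  simp only [derivAlong_prodMk X (hf.differentiable one_ne_zero _)]
  exact hXν (hf.comp (contDiff_prodMk_right A)) (.intro (hfc.isCompact.image continuous_snd)
    fun g hg => image_eq_zero_of_notMem_tsupport fun h => hg ⟨_, h, rfl⟩)

theorem exists_forall_mem_pow_mul_norm_integral_mul_fourierChar_le [FiniteDimensional ℝ F]
    {ν : Measure E} [IsFiniteMeasureOnCompacts ν] {X : ι → E → E} {φ : F × E → ℝ} {u : E → ℂ}
    (hXν : ∀ i, IsDivergenceFree ν (X i)) (hX : ∀ i, ContDiff ℝ ∞ (X i))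
    (hφ : ContDiff ℝ ∞ φ) (hu : ContDiff ℝ ∞ u) {P : Set F} (hP : IsCompact P) {K : Set E}
    (hK : IsCompact K) (hνK : ∀ᵐ g ∂ν, u g ≠ 0 → g ∈ K)
    (hne : ∀ A ∈ P, ∀ g ∈ K, ∃ i, derivAlong (X i) (fun h => φ (A, h)) g ≠ 0) (N : ℕ) :
    ∃ C : ℝ, ∀ R : ℝ, ∀ A ∈ P, |R| ^ N * ‖∫ g, u g * 𝐞 (R * φ (A, g)) ∂ν‖ ≤ C := by
  have := FiniteDimensional.proper_real E
  borelize F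
  obtain ⟨C, S, hS, hC⟩ := exists_pow_mul_norm_integral_mul_fourierChar_le_of_isCompact
    (X := fun i (p : F × E) => (0, X i p.2)) (u := fun p => u p.2)
    (fun i => contDiff_const.prodMk ((hX i).comp contDiff_snd)) hφ (hu.comp contDiff_snd)
    (hP.prod hK) (fun p hp => by
      simpa only [derivAlong_prodMk _ (hφ.differentiable (by simp) _)]
        using hne p.1 hp.1 p.2 hp.2) N
  -- The bound on `F × E` is uniform in the measure, so it applies to every `δ_A ⊗ ν` at once.
  refine ⟨|C| * ν.real (Prod.snd '' S), fun R A hA => ?_⟩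
  have := isFiniteMeasureOnCompacts_map_prodMk (ν := ν) A
  have hemb : MeasurableEmbedding (Prod.mk A : E → F × E) := measurableEmbedding_prodMk_left A
  have hbound := hC R (ν.map (Prod.mk A)) (fun i => (hXν i).map_prodMk (hX i).continuous A)
    (hemb.ae_map_iff.2 (hνK.mono fun g hg hu => ⟨hA, hg hu⟩))
  rw [hemb.integral_map, map_measureReal_apply measurable_prodMk_left hS.measurableSet] at hbound
  refine hbound.trans (mul_le_mul (le_abs_self C) ?_ measureReal_nonneg (abs_nonneg C))
  exact measureReal_mono (fun g hg => ⟨(A, g), hg, rfl⟩)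
    (hS.image continuous_snd).measure_lt_top.ne

end CompactFamilies

section MatrixNorm

/- The topology of the norm on matrices is the product topology, but instance search does not
unfold `Matrix.normedAddCommGroup` far enough to see this. -/

variable {m n : Type*} [Fintype m] [Fintype n]

instance matrixNormBorelSpace :
    @BorelSpace (Matrix m n ℝ) PseudoMetricSpace.toUniformSpace.toTopologicalSpace _ :=
  matrixBorelSpace m n

instance matrixNormIsFiniteMeasureOnCompacts (ν : Measure (Matrix m n ℝ))
    [hν : IsFiniteMeasureOnCompacts ν] :
    @IsFiniteMeasureOnCompacts _ _ PseudoMetricSpace.toUniformSpace.toTopologicalSpace ν :=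
  hν

end MatrixNorm

theorem isDivergenceFree_of_apply_apply_eq_zero {V : Type*} [NormedAddCommGroup V]
    [NormedSpace ℝ V] [MeasurableSpace V] [BorelSpace V] {ν : Measure V}
    [IsFiniteMeasureOnCompacts ν] (T : V →L[ℝ] V) (hT : ∀ p, T (T p) = 0)
    (hν : ∀ t : ℝ, MeasurePreserving (fun p => p + t • T p) ν ν) : IsDivergenceFree ν T := by
  let θ : Flow ℝ V :=
    { toFun := fun t p => p + t • T p
      cont' := by fun_prop
      map_add' := fun s t p => by simp only [map_add, map_smul, hT]; module
      map_zero' := fun p => by simp }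
  refine isDivergenceFree_of_measurePreserving_flow θ T.continuous (fun t p => ?_) hν
  have hTθ : T (p + t • T p) = T p := by simp [hT]
  change HasDerivAt (fun s : ℝ => p + s • T p) (T (p + t • T p)) t
  rw [hTθ]
  simpa using ((hasDerivAt_id t).smul_const (T p)).const_add p

section SpecialLinear

open Matrix

variable {n : Type*} [Fintype n]

theorem contDiff_trace_mul :
    ContDiff ℝ ∞ fun p : Matrix n n ℝ × Matrix n n ℝ => (p.2 * p.1).trace :=
  ((LinearMap.mul ℝ (Matrix n n ℝ)).compr₂
    (traceLinearMap n ℝ ℝ)).toContinuousBilinearMap.isBoundedBilinearMap.contDiff.comp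
      (contDiff_snd.prodMk contDiff_fst)

theorem derivAlong_trace_mul (X : Matrix n n ℝ → Matrix n n ℝ) (A g : Matrix n n ℝ) :
    derivAlong X (fun h => (h * A).trace) g = (X g * A).trace := by
  let T : Matrix n n ℝ →L[ℝ] ℝ :=
    (traceLinearMap n ℝ ℝ ∘ₗ LinearMap.mulRight ℝ A).toContinuousLinearMap
  exact congrArg (· (X g)) T.fderiv

variable [DecidableEq n]

section CommRing

variable {R : Type*} [CommRing R]

theorem det_one_add_smul_vecMulVec_eq_one {u v : n → R} (h : v ⬝ᵥ u = 0) (t : R) :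
    (1 + t • vecMulVec u v).det = 1 := by
  rw [← smul_vecMulVec, vecMulVec_eq Unit, det_one_add_replicateCol_mul_replicateRow,
    dotProduct_smul, h, smul_zero, add_zero]

theorem exists_eq_smul_one_of_forall_dotProduct_mulVec_eq_zero {M : Matrix n n R}
    (hM : ∀ u v : n → R, v ⬝ᵥ u = 0 → v ⬝ᵥ M *ᵥ u = 0) : ∃ c : R, M = c • 1 := by
  have hoff : ∀ i j, i ≠ j → M i j = 0 := fun i j hij => by
    simpa using hM (Pi.single j 1) (Pi.single i 1) (by simp [hij])
  have hdiag : ∀ i j, M i i = M j j := fun i j => by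
    rcases eq_or_ne i j with rfl | hij
    · rfl
    have h := hM (Pi.single i 1 + Pi.single j 1) (Pi.single i 1 - Pi.single j 1)
      (by simp [hij, hij.symm])
    simpa [mulVec_add, sub_dotProduct, hoff i j hij, hoff j i hij.symm, ← sub_eq_add_neg,
      sub_eq_zero] using h
  cases isEmpty_or_nonempty n with
  | inl _ => exact ⟨0, Subsingleton.elim _ _⟩
  | inr hn =>
    obtain ⟨k⟩ := hn
    refine ⟨M k k, ext fun i j => ?_⟩
    rcases eq_or_ne i j with rfl | hij
    · simp [hdiag i k]
    · simp [hoff i j hij, hij]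

end CommRing

theorem norm_pow_card_eq_of_forall_trace_eq_zero {A g : Matrix n n ℝ} (hg : g.det = 1)
    (h : ∀ u v, v ⬝ᵥ u = 0 → (g * vecMulVec u v * A).trace = 0) :
    ‖A‖ ^ Fintype.card n = ‖g.adjugate‖ ^ Fintype.card n * |A.det| := by
  obtain ⟨c, hc⟩ := exists_eq_smul_one_of_forall_dotProduct_mulVec_eq_zero (M := A * g)
    fun u v huv => by
      rw [← h u v huv, trace_mul_comm, ← mul_assoc, mul_vecMulVec, trace_vecMulVec,
        dotProduct_comm]
  have hA : A = c • g.adjugate := by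
    rw [← mul_one A, ← one_smul ℝ (1 : Matrix n n ℝ), ← hg, ← mul_adjugate, ← mul_assoc, hc,
      smul_mul, one_mul]
  rw [hA, norm_smul, det_smul, det_adjugate, hg, one_pow, mul_one, abs_pow, mul_pow,
    Real.norm_eq_abs, mul_comm]

theorem exists_pos_forall_exists_trace_ne_zero {K : Set (Matrix n n ℝ)} (hK : IsCompact K)
    (hdet : ∀ g ∈ K, g.det = 1) :
    ∃ δ > 0, ∀ A : Matrix n n ℝ, A ≠ 0 → |A.det| ≤ δ * ‖A‖ ^ Fintype.card n → ∀ g ∈ K,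
      ∃ u v, v ⬝ᵥ u = 0 ∧ (g * vecMulVec u v * A).trace ≠ 0 := by
  obtain ⟨G, hG⟩ := hK.exists_bound_of_continuousOn (f := fun g => ‖g.adjugate‖ ^ Fintype.card n)
    (by fun_prop)
  refine ⟨(|G| + 1)⁻¹, by positivity, fun A hA0 hA g hg => ?_⟩
  by_contra! hcrit
  have hApos : 0 < ‖A‖ ^ Fintype.card n := by positivity
  have hGg : ‖g.adjugate‖ ^ Fintype.card n ≤ |G| :=
    (le_abs_self _).trans ((hG g hg).trans (le_abs_self G))
  have hlt : ‖A‖ ^ Fintype.card n < ‖A‖ ^ Fintype.card n := calc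
    ‖A‖ ^ Fintype.card n = ‖g.adjugate‖ ^ Fintype.card n * |A.det| :=
      norm_pow_card_eq_of_forall_trace_eq_zero (hdet g hg) hcrit
    _ ≤ |G| * ((|G| + 1)⁻¹ * ‖A‖ ^ Fintype.card n) := by gcongr
    _ = |G| / (|G| + 1) * ‖A‖ ^ Fintype.card n := by ring
    _ < ‖A‖ ^ Fintype.card n :=
      mul_lt_of_lt_one_left hApos ((div_lt_one (by positivity)).2 (lt_add_one _))
  exact hlt.false

variable {ν : Measure (Matrix n n ℝ)} [IsFiniteMeasureOnCompacts ν]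

theorem isDivergenceFree_mul_vecMulVec
    (hinv : ∀ h : Matrix n n ℝ, h.det = 1 → ν.map (· * h) = ν) {u v : n → ℝ}
    (huv : v ⬝ᵥ u = 0) : IsDivergenceFree ν fun g => g * vecMulVec u v := by
  set T := (LinearMap.mulRight ℝ (vecMulVec u v)).toContinuousLinearMap
  have hTT : ∀ g, T (T g) = 0 := fun g => by
    simp [T, mul_assoc, vecMulVec_mul_vecMulVec, huv]
  refine isDivergenceFree_of_apply_apply_eq_zero T hTT fun t => ?_
  have hflow : (fun g => g + t • T g) = (· * (1 + t • vecMulVec u v)) :=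
    funext fun g => by simp [T, mul_add]
  exact (congrArg (MeasurePreserving · ν ν) hflow).mpr
    ⟨(continuous_id.matrix_mul continuous_const).measurable,
      hinv _ (det_one_add_smul_vecMulVec_eq_one huv t)⟩

theorem exists_pos_forall_exists_pow_mul_norm_integral_fourierChar_trace_le
    (hdet : ∀ᵐ g ∂ν, g.det = 1) (hinv : ∀ h : Matrix n n ℝ, h.det = 1 → ν.map (· * h) = ν)
    {u : Matrix n n ℝ → ℂ} (hu : ContDiff ℝ ∞ u) (huc : HasCompactSupport u) :
    ∃ δ > 0, ∀ N : ℕ, ∃ C : ℝ, ∀ A : Matrix n n ℝ, A ≠ 0 →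
      |A.det| ≤ δ * ‖A‖ ^ Fintype.card n →
        ‖A‖ ^ N * ‖∫ g, u g * 𝐞 (-(g * A).trace) ∂ν‖ ≤ C := by
  have := FiniteDimensional.proper_real (Matrix n n ℝ)
  have hK : IsCompact (tsupport u ∩ {g | g.det = 1}) :=
    huc.isCompact.inter_right (isClosed_eq (by fun_prop) continuous_const)
  obtain ⟨δ, hδ, hne⟩ := exists_pos_forall_exists_trace_ne_zero hK fun g hg => hg.2
  set P : Set (Matrix n n ℝ) := sphere 0 1 ∩ {A | |A.det| ≤ δ}
  have hP : IsCompact P :=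
    (isCompact_sphere 0 1).inter_right (isClosed_le (by fun_prop) continuous_const)
  set X : {w : (n → ℝ) × (n → ℝ) // w.2 ⬝ᵥ w.1 = 0} → Matrix n n ℝ → Matrix n n ℝ :=
    fun w g => g * vecMulVec w.1.1 w.1.2
  have hX : ∀ w, ContDiff ℝ ∞ (X w) := fun w =>
    (LinearMap.mulRight ℝ (vecMulVec w.1.1 w.1.2)).toContinuousLinearMap.contDiff
  have hXne : ∀ A ∈ P, ∀ g ∈ tsupport u ∩ {g | g.det = 1}, ∃ w,
      derivAlong (X w) (fun h => (h * A).trace) g ≠ 0 := fun A hA g hg => by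
    obtain ⟨v, w, hvw, h⟩ := hne A (ne_zero_of_mem_unit_sphere ⟨A, hA.1⟩)
      (by simpa [mem_sphere_zero_iff_norm.1 hA.1] using hA.2) g hg
    exact ⟨⟨(v, w), hvw⟩, by rwa [derivAlong_trace_mul]⟩
  refine ⟨δ, hδ, fun N => ?_⟩
  obtain ⟨C, hC⟩ := exists_forall_mem_pow_mul_norm_integral_mul_fourierChar_le (ν := ν)
    (fun w => isDivergenceFree_mul_vecMulVec hinv w.2) hX contDiff_trace_mul hu hP hK
    (hdet.mono fun g hg hug => ⟨subset_tsupport _ hug, hg⟩) hXne N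
  refine ⟨C, fun A hA0 hA => ?_⟩
  have hnorm : 0 < ‖A‖ := norm_pos_iff.2 hA0
  have hAP : ‖A‖⁻¹ • A ∈ P := by
    refine ⟨by simp [norm_smul, hnorm.ne'], ?_⟩
    rw [mem_ofPred_eq, det_smul, abs_mul, abs_of_pos (by positivity), inv_pow,
      inv_mul_le_iff₀ (by positivity), mul_comm]
    exact hA
  simpa [hnorm.ne'] using hC (-‖A‖) _ hAP

end SpecialLinear

section Plane

open Matrix

/-- The matrix `ξ xᵀ + η yᵀ`, through which the phase `x · gξ + y · gη` becomes the linear form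
`g ↦ tr (g A)`. -/
def phaseMatrix {n : Type*} (ξ η x y : EuclideanSpace ℝ n) : Matrix n n ℝ :=
  vecMulVec ξ.ofLp x.ofLp + vecMulVec η.ofLp y.ofLp

theorem phaseMatrix_swap {n : Type*} (ξ η x y : EuclideanSpace ℝ n) :
    phaseMatrix η ξ y x = phaseMatrix ξ η x y :=
  add_comm _ _

theorem trace_mul_phaseMatrix {n : Type*} [Fintype n] [DecidableEq n] (g : Matrix n n ℝ)
    (ξ η x y : EuclideanSpace ℝ n) :
    (g * phaseMatrix ξ η x y).trace = ⟪x, toEuclideanLin g ξ⟫ + ⟪y, toEuclideanLin g η⟫ := by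
  simp [phaseMatrix, mul_add, mul_vecMulVec, trace_vecMulVec,
    EuclideanSpace.inner_eq_star_dotProduct]

variable {ξ η x y : EuclideanSpace ℝ (Fin 2)}

theorem det_phaseMatrix (ξ η x y : EuclideanSpace ℝ (Fin 2)) :
    (phaseMatrix ξ η x y).det
      = (ξ 0 * η 1 - ξ 1 * η 0) * (x 0 * y 1 - x 1 * y 0) := by
  simp only [phaseMatrix, det_fin_two, Matrix.add_apply, vecMulVec_apply]
  ring

theorem abs_wedge_le_norm_mul_norm (x y : EuclideanSpace ℝ (Fin 2)) :
    |x 0 * y 1 - x 1 * y 0| ≤ ‖x‖ * ‖y‖ := by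
  refine abs_le_of_sq_le_sq ?_ (by positivity)
  rw [mul_pow, EuclideanSpace.real_norm_sq_eq, EuclideanSpace.real_norm_sq_eq, Fin.sum_univ_two,
    Fin.sum_univ_two]
  nlinarith [sq_nonneg (x 0 * y 0 + x 1 * y 1)]

theorem norm_le_two_mul_of_forall_abs_apply_le {b : ℝ} (h : ∀ i, |x i| ≤ b) : ‖x‖ ≤ 2 * b := by
  have hb : 0 ≤ b := (abs_nonneg _).trans (h 0)
  refine abs_le_of_sq_le_sq' ?_ (by positivity) |>.2
  rw [EuclideanSpace.real_norm_sq_eq, Fin.sum_univ_two]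
  nlinarith [sq_le_sq' (abs_le.1 (h 0)).1 (abs_le.1 (h 0)).2,
    sq_le_sq' (abs_le.1 (h 1)).1 (abs_le.1 (h 1)).2]

theorem abs_wedge_mul_norm_le_norm_phaseMatrix (ξ η x y : EuclideanSpace ℝ (Fin 2)) :
    |x 0 * y 1 - x 1 * y 0| * ‖ξ‖ ≤ 4 * ‖y‖ * ‖phaseMatrix ξ η x y‖ := by
  set A := phaseMatrix ξ η x y with hA
  have hentry : ∀ i j k, |A i j * y k| ≤ ‖A‖ * ‖y‖ := fun i j k => by
    rw [abs_mul]
    exact mul_le_mul (norm_entry_le_entrywise_sup_norm A) (PiLp.norm_apply_le y k)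
      (abs_nonneg _) (norm_nonneg _)
  -- Pairing the rows of `A` with `y^⊥` annihilates `η yᵀ`.
  have hcoord : ∀ i, |((x 0 * y 1 - x 1 * y 0) • ξ) i| ≤ 2 * (‖A‖ * ‖y‖) := fun i => calc
    |((x 0 * y 1 - x 1 * y 0) • ξ) i| = |A i 0 * y 1 - A i 1 * y 0| := by
      simp only [hA, phaseMatrix, Matrix.add_apply, vecMulVec_apply, PiLp.smul_apply, smul_eq_mul]
      ring_nf
    _ ≤ |A i 0 * y 1| + |A i 1 * y 0| := abs_sub _ _
    _ ≤ 2 * (‖A‖ * ‖y‖) := by linarith [hentry i 0 1, hentry i 1 0]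
  have h := norm_le_two_mul_of_forall_abs_apply_le hcoord
  rw [norm_smul, Real.norm_eq_abs] at h
  linarith

theorem max_norm_le_norm_phaseMatrix {c₀ C₀ : ℝ} (hc₀ : 0 < c₀) (hx : ‖x‖ ≤ C₀) (hy : ‖y‖ ≤ C₀)
    (hxy : c₀ ≤ |x 0 * y 1 - x 1 * y 0|) :
    max ‖ξ‖ ‖η‖ ≤ 4 * C₀ / c₀ * ‖phaseMatrix ξ η x y‖ := by
  have hxy' : c₀ ≤ |y 0 * x 1 - y 1 * x 0| := by
    rw [abs_sub_comm]; convert hxy using 3 <;> ring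
  rw [div_mul_eq_mul_div, le_div_iff₀' hc₀, mul_max_of_nonneg _ _ hc₀.le]
  refine max_le ?_ ?_
  · calc c₀ * ‖ξ‖ ≤ |x 0 * y 1 - x 1 * y 0| * ‖ξ‖ := by gcongr
      _ ≤ 4 * ‖y‖ * ‖phaseMatrix ξ η x y‖ := abs_wedge_mul_norm_le_norm_phaseMatrix ξ η x y
      _ ≤ 4 * C₀ * ‖phaseMatrix ξ η x y‖ := by gcongr
  · calc c₀ * ‖η‖ ≤ |y 0 * x 1 - y 1 * x 0| * ‖η‖ := by gcongr
      _ ≤ 4 * ‖x‖ * ‖phaseMatrix η ξ y x‖ := abs_wedge_mul_norm_le_norm_phaseMatrix η ξ y x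
      _ ≤ 4 * C₀ * ‖phaseMatrix ξ η x y‖ := by rw [phaseMatrix_swap]; gcongr

theorem abs_wedge_le_of_not_comparable {K : ℝ} (hK : 0 < K)
    (h : ¬(K⁻¹ * ‖η‖ ≤ ‖ξ‖ ∧ ‖ξ‖ ≤ K * ‖η‖ ∧
      K⁻¹ * max ‖ξ‖ ‖η‖ ^ 2 ≤ |ξ 0 * η 1 - ξ 1 * η 0|)) :
    |ξ 0 * η 1 - ξ 1 * η 0| ≤ K⁻¹ * max ‖ξ‖ ‖η‖ ^ 2 := by
  by_contra! hlt
  have hprod : K⁻¹ * max ‖ξ‖ ‖η‖ ^ 2 < ‖ξ‖ * ‖η‖ := hlt.trans_le (abs_wedge_le_norm_mul_norm ξ η)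
  refine h ⟨?_, ?_, hlt.le⟩ <;> by_contra! hcmp
  · refine hprod.not_ge ?_
    calc ‖ξ‖ * ‖η‖ ≤ K⁻¹ * ‖η‖ * ‖η‖ := by gcongr
      _ = K⁻¹ * ‖η‖ ^ 2 := by ring
      _ ≤ K⁻¹ * max ‖ξ‖ ‖η‖ ^ 2 := by gcongr; exact le_max_right _ _
  · refine hprod.not_ge ?_
    calc ‖ξ‖ * ‖η‖ = K⁻¹ * (‖ξ‖ * (K * ‖η‖)) := by field_simp
      _ ≤ K⁻¹ * (‖ξ‖ * ‖ξ‖) := by gcongr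
      _ ≤ K⁻¹ * max ‖ξ‖ ‖η‖ ^ 2 := by rw [← sq]; gcongr; exact le_max_left _ _

theorem abs_det_phaseMatrix_le {K c₀ C₀ δ : ℝ} (hc₀ : 0 < c₀) (hδ : 0 < δ) (hK : 0 < K)
    (hKδ : C₀ ^ 2 * (4 * C₀ / c₀) ^ 2 / δ ≤ K) (hx : ‖x‖ ≤ C₀) (hy : ‖y‖ ≤ C₀)
    (hxy : c₀ ≤ |x 0 * y 1 - x 1 * y 0|)
    (hξη : |ξ 0 * η 1 - ξ 1 * η 0| ≤ K⁻¹ * max ‖ξ‖ ‖η‖ ^ 2) :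
    |(phaseMatrix ξ η x y).det| ≤ δ * ‖phaseMatrix ξ η x y‖ ^ 2 := by
  have hwedge : |x 0 * y 1 - x 1 * y 0| ≤ C₀ * C₀ :=
    (abs_wedge_le_norm_mul_norm x y).trans <|
      mul_le_mul hx hy (norm_nonneg _) ((norm_nonneg _).trans hx)
  have hmax := max_norm_le_norm_phaseMatrix (ξ := ξ) (η := η) hc₀ hx hy hxy
  have hconst : K⁻¹ * (C₀ ^ 2 * (4 * C₀ / c₀) ^ 2) ≤ δ := by
    rw [inv_mul_le_iff₀ hK]
    exact (div_le_iff₀ hδ).1 hKδ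
  calc |(phaseMatrix ξ η x y).det|
      = |ξ 0 * η 1 - ξ 1 * η 0| * |x 0 * y 1 - x 1 * y 0| := by rw [det_phaseMatrix, abs_mul]
    _ ≤ K⁻¹ * max ‖ξ‖ ‖η‖ ^ 2 * (C₀ * C₀) := by gcongr
    _ ≤ K⁻¹ * (4 * C₀ / c₀ * ‖phaseMatrix ξ η x y‖) ^ 2 * (C₀ * C₀) := by
      gcongr
      exact mul_self_nonneg _
    _ = K⁻¹ * (C₀ ^ 2 * (4 * C₀ / c₀) ^ 2) * ‖phaseMatrix ξ η x y‖ ^ 2 := by ring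
    _ ≤ δ * ‖phaseMatrix ξ η x y‖ ^ 2 := by gcongr

theorem exists_one_le_forall_exists_pow_mul_norm_integral_phaseMatrix_le
    {ν : Measure (Matrix (Fin 2) (Fin 2) ℝ)} [IsFiniteMeasureOnCompacts ν]
    (hdet : ∀ᵐ g ∂ν, g.det = 1)
    (hinv : ∀ h : Matrix (Fin 2) (Fin 2) ℝ, h.det = 1 → ν.map (· * h) = ν)
    {u : Matrix (Fin 2) (Fin 2) ℝ → ℂ} (hu : ContDiff ℝ ∞ u) (huc : HasCompactSupport u)
    {c₀ : ℝ} (hc₀ : 0 < c₀) (C₀ : ℝ) :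
    ∃ K : ℝ, 1 ≤ K ∧ ∀ N : ℕ, ∃ C : ℝ, 0 < C ∧ ∀ ξ η : EuclideanSpace ℝ (Fin 2),
      0 < max ‖ξ‖ ‖η‖ → |ξ 0 * η 1 - ξ 1 * η 0| ≤ K⁻¹ * max ‖ξ‖ ‖η‖ ^ 2 →
        ∀ x y : EuclideanSpace ℝ (Fin 2), ‖x‖ ≤ C₀ → ‖y‖ ≤ C₀ →
          c₀ ≤ |x 0 * y 1 - x 1 * y 0| →
            max ‖ξ‖ ‖η‖ ^ N * ‖∫ g, u g * 𝐞 (-(g * phaseMatrix ξ η x y).trace) ∂ν‖ ≤ C := by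
  obtain ⟨δ, hδ, hdecay⟩ :=
    exists_pos_forall_exists_pow_mul_norm_integral_fourierChar_trace_le hdet hinv hu huc
  refine ⟨max 1 (C₀ ^ 2 * (4 * C₀ / c₀) ^ 2 / δ), le_max_left _ _, fun N => ?_⟩
  obtain ⟨C, hC⟩ := hdecay N
  refine ⟨|(4 * C₀ / c₀) ^ N * C| + 1, by positivity, fun ξ η hpos hξη x y hx hy hxy => ?_⟩
  have hmax := max_norm_le_norm_phaseMatrix (ξ := ξ) (η := η) hc₀ hx hy hxy
  have hA : phaseMatrix ξ η x y ≠ 0 := fun h => by simp [h, hpos.not_ge] at hmax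
  have hsmall := abs_det_phaseMatrix_le hc₀ hδ (by positivity) (le_max_right 1 _) hx hy hxy hξη
  have hC₀ : 0 ≤ C₀ := (norm_nonneg x).trans hx
  set I := ‖∫ g, u g * 𝐞 (-(g * phaseMatrix ξ η x y).trace) ∂ν‖
  calc max ‖ξ‖ ‖η‖ ^ N * I ≤ (4 * C₀ / c₀ * ‖phaseMatrix ξ η x y‖) ^ N * I := by gcongr
    _ = (4 * C₀ / c₀) ^ N * (‖phaseMatrix ξ η x y‖ ^ N * I) := by ring
    _ ≤ (4 * C₀ / c₀) ^ N * C := by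
      gcongr
      exact hC _ hA (by simpa using hsmall)
    _ ≤ |(4 * C₀ / c₀) ^ N * C| + 1 := (le_abs_self _).trans (le_add_of_nonneg_right zero_le_one)

theorem measureFT_eq_integral_fourierChar (μ : Measure (EuclideanSpace ℝ (Fin 2)))
    (ξ : EuclideanSpace ℝ (Fin 2)) : measureFT μ ξ = ∫ x, (𝐞 (-⟪x, ξ⟫) : ℂ) ∂μ := by
  simp only [measureFT, Real.fourierChar_apply, mul_neg, neg_mul]

theorem integral_measureFT_mul_measureFT (μ₁ μ₂ : Measure (EuclideanSpace ℝ (Fin 2)))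
    [IsFiniteMeasure μ₁] [IsFiniteMeasure μ₂] (ν : Measure (Matrix (Fin 2) (Fin 2) ℝ))
    [IsFiniteMeasureOnCompacts ν] {u : Matrix (Fin 2) (Fin 2) ℝ → ℂ} (hu : Continuous u)
    (huc : HasCompactSupport u) (ξ η : EuclideanSpace ℝ (Fin 2)) :
    ∫ g, measureFT μ₁ (toEuclideanLin g ξ) * measureFT μ₂ (toEuclideanLin g η) * u g ∂ν
      = ∫ p, ∫ g, u g * 𝐞 (-(g * phaseMatrix ξ η p.1 p.2).trace) ∂ν ∂(μ₁.prod μ₂) := by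
  have : SigmaCompactSpace (Matrix (Fin 2) (Fin 2) ℝ) :=
    inferInstanceAs (SigmaCompactSpace (Fin 2 → Fin 2 → ℝ))
  have hpt : ∀ g, measureFT μ₁ (toEuclideanLin g ξ) * measureFT μ₂ (toEuclideanLin g η) * u g
      = ∫ p, u g * 𝐞 (-(g * phaseMatrix ξ η p.1 p.2).trace) ∂(μ₁.prod μ₂) := fun g => by
    simp_rw [measureFT_eq_integral_fourierChar, ← integral_prod_mul, trace_mul_phaseMatrix,
      neg_add, AddChar.map_add_eq_mul, Circle.coe_mul, integral_const_mul, mul_comm]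
  simp_rw [hpt]
  refine integral_integral_swap ?_
  have hcont : Continuous fun z : Matrix (Fin 2) (Fin 2) ℝ ×
      EuclideanSpace ℝ (Fin 2) × EuclideanSpace ℝ (Fin 2) =>
        u z.1 * 𝐞 (-(z.1 * phaseMatrix ξ η z.2.1 z.2.2).trace) := by
    unfold phaseMatrix
    fun_prop
  refine ((hu.integrable_of_hasCompactSupport huc).norm.mul_prod (integrable_const (1 : ℝ))).mono
    hcont.aestronglyMeasurable (.of_forall fun z => ?_)
  simp only [uncurry, norm_mul, Circle.norm_coe, norm_norm, mul_one, le_refl]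

end Plane

section Pushforward

open Matrix

theorem isClosed_setOf_det_eq_one {n : Type*} [Fintype n] [DecidableEq n] :
    IsClosed {A : Matrix n n ℝ | A.det = 1} :=
  isClosed_eq (by fun_prop) continuous_const

theorem measurableEmbedding_coe_SL2 : MeasurableEmbedding
    fun g : SpecialLinearGroup (Fin 2) ℝ => (g : Matrix (Fin 2) (Fin 2) ℝ) :=
  .subtype_coe isClosed_setOf_det_eq_one.measurableSet

/-- The image of a measure on `SL₂(ℝ)` in the vector space of `2 × 2` matrices, where it can be
differentiated along vector fields. -/
noncomputable def matrixMeasure (lam : Measure (SpecialLinearGroup (Fin 2) ℝ)) :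
    Measure (Matrix (Fin 2) (Fin 2) ℝ) :=
  lam.map fun g : SpecialLinearGroup (Fin 2) ℝ => (g : Matrix (Fin 2) (Fin 2) ℝ)

variable (lam : Measure (SpecialLinearGroup (Fin 2) ℝ))

instance [IsFiniteMeasureOnCompacts lam] : IsFiniteMeasureOnCompacts (matrixMeasure lam) := by
  refine ⟨fun K hK => ?_⟩
  rw [matrixMeasure, measurableEmbedding_coe_SL2.map_apply]
  have hpre : IsCompact
      ((fun g : SpecialLinearGroup (Fin 2) ℝ => (g : Matrix (Fin 2) (Fin 2) ℝ)) ⁻¹' K) :=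
    isClosed_setOf_det_eq_one.isClosedEmbedding_subtypeVal.isCompact_preimage hK
  exact hpre.measure_lt_top

theorem ae_matrixMeasure_det_eq_one : ∀ᵐ g ∂(matrixMeasure lam), g.det = 1 :=
  measurableEmbedding_coe_SL2.ae_map_iff.2 (.of_forall fun g => g.2)

theorem integral_matrixMeasure {G : Type*} [NormedAddCommGroup G] [NormedSpace ℝ G]
    (f : Matrix (Fin 2) (Fin 2) ℝ → G) :
    ∫ g, f g ∂(matrixMeasure lam)
      = ∫ g : SpecialLinearGroup (Fin 2) ℝ, f (g : Matrix (Fin 2) (Fin 2) ℝ) ∂lam :=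
  measurableEmbedding_coe_SL2.integral_map f

variable {lam}

theorem map_mul_right_matrixMeasure
    (hinv : ∀ g₀ : SpecialLinearGroup (Fin 2) ℝ, lam.map (fun g => g * g₀) = lam)
    {h : Matrix (Fin 2) (Fin 2) ℝ} (hh : h.det = 1) :
    (matrixMeasure lam).map (· * h) = matrixMeasure lam := by
  have hcoe := measurableEmbedding_coe_SL2.measurable
  have hmul : Measurable fun g : Matrix (Fin 2) (Fin 2) ℝ => g * h :=
    (continuous_id.matrix_mul continuous_const).measurable
  have hmulSL : Measurable fun g : SpecialLinearGroup (Fin 2) ℝ => g * ⟨h, hh⟩ :=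
    measurableEmbedding_coe_SL2.measurable_comp_iff.1 (hmul.comp hcoe)
  calc (matrixMeasure lam).map (· * h)
      = matrixMeasure (lam.map fun g => g * ⟨h, hh⟩) :=
        (Measure.map_map hmul hcoe).trans (Measure.map_map hcoe hmulSL).symm
    _ = matrixMeasure lam := congrArg matrixMeasure (hinv ⟨h, hh⟩)

end Pushforward

theorem sl2_oscillatory_integral_rapid_decay_general
    (ψ : Matrix (Fin 2) (Fin 2) ℝ → ℂ) (hψ : ContDiff ℝ ∞ ψ) (hψc : HasCompactSupport ψ)
    (lam : Measure (Matrix.SpecialLinearGroup (Fin 2) ℝ)) [IsFiniteMeasureOnCompacts lam]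
    (hinv : ∀ g₀ : Matrix.SpecialLinearGroup (Fin 2) ℝ, lam.map (fun g => g * g₀) = lam)
    (c₀ C₀ : ℝ) (hc₀ : 0 < c₀) :
    ∃ K : ℝ, 1 ≤ K ∧ ∀ N : ℕ, ∃ C : ℝ, 0 < C ∧
      ∀ (μ₁ μ₂ : Measure (EuclideanSpace ℝ (Fin 2))) [IsFiniteMeasure μ₁] [IsFiniteMeasure μ₂],
        (∀ᵐ p ∂(μ₁.prod μ₂), ‖p.1‖ ≤ C₀ ∧ ‖p.2‖ ≤ C₀ ∧
          c₀ ≤ |p.1 0 * p.2 1 - p.1 1 * p.2 0|) →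
        ∀ ξ η : EuclideanSpace ℝ (Fin 2), 0 < max ‖ξ‖ ‖η‖ →
          ¬(K⁻¹ * ‖η‖ ≤ ‖ξ‖ ∧ ‖ξ‖ ≤ K * ‖η‖ ∧
            K⁻¹ * max ‖ξ‖ ‖η‖ ^ 2 ≤ |ξ 0 * η 1 - ξ 1 * η 0|) →
          ‖∫ g : Matrix.SpecialLinearGroup (Fin 2) ℝ,
              measureFT μ₁ (Matrix.toEuclideanLin (g : Matrix (Fin 2) (Fin 2) ℝ) ξ)
                * measureFT μ₂ (Matrix.toEuclideanLin (g : Matrix (Fin 2) (Fin 2) ℝ) η)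
                * ψ (g : Matrix (Fin 2) (Fin 2) ℝ) ∂lam‖
            ≤ C * (μ₁.prod μ₂).real univ * max ‖ξ‖ ‖η‖ ^ (-(N : ℝ)) := by
  obtain ⟨K, hK, hdecay⟩ := exists_one_le_forall_exists_pow_mul_norm_integral_phaseMatrix_le
    (ae_matrixMeasure_det_eq_one lam) (fun _ => map_mul_right_matrixMeasure hinv) hψ hψc hc₀ C₀
  refine ⟨K, hK, fun N => ?_⟩
  obtain ⟨C, hC, hbound⟩ := hdecay N
  refine ⟨C, hC, fun μ₁ μ₂ _ _ hμ ξ η hpos hξη => ?_⟩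
  have hwedge := abs_wedge_le_of_not_comparable (zero_lt_one.trans_le hK) hξη
  rw [← integral_matrixMeasure lam fun g =>
      measureFT μ₁ (Matrix.toEuclideanLin g ξ) * measureFT μ₂ (Matrix.toEuclideanLin g η) * ψ g,
    integral_measureFT_mul_measureFT _ _ _ hψ.continuous hψc, mul_right_comm]
  refine norm_integral_le_of_norm_le_const (hμ.mono fun p ⟨hx, hy, hxy⟩ => ?_)
  rw [Real.rpow_neg hpos.le, Real.rpow_natCast, ← div_eq_mul_inv, le_div_iff₀' (by positivity)]
  exact hbound ξ η hpos hwedge p.1 p.2 hx hy hxy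

/-- **Non-stationary phase estimate on `SL₂(ℝ)`** (Lemma 5.1 of "Group actions, the
Mattila integral and applications"): if `μ₁, μ₂` are compactly supported probability
measures on `ℝ²` with `c₀ ≤ |x|, |y|, |x·y^⊥| ≤ C₀` on their supports, `ψ` is a smooth
compactly supported function and `λ` a right Haar measure on `SL₂(ℝ)`, then there is
`K ≥ 1` such that for every `N` there is `C_N` with
`|∫_{SL₂(ℝ)} μ̂₁(gξ) μ̂₂(gη) ψ(g) dλ(g)| ≤ C_N max(|ξ|,|η|)^{-N}`
unless `|ξ| ≈_K |η|` and `|ξ·η^⊥| ≳_K max(|ξ|,|η|)²`. -/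
theorem sl2_oscillatory_integral_rapid_decay
    (μ₁ μ₂ : Measure (EuclideanSpace ℝ (Fin 2)))
    [IsProbabilityMeasure μ₁] [IsProbabilityMeasure μ₂]
    (S₁ S₂ : Set (EuclideanSpace ℝ (Fin 2)))
    (hS₁ : IsCompact S₁) (hS₂ : IsCompact S₂)
    (hμ₁S : μ₁ S₁ᶜ = 0) (hμ₂S : μ₂ S₂ᶜ = 0)
    (c₀ C₀ : ℝ) (hc₀ : 0 < c₀) (hC₀ : c₀ < C₀)
    (hgeom : ∀ x ∈ S₁, ∀ y ∈ S₂,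
      c₀ ≤ ‖x‖ ∧ ‖x‖ ≤ C₀ ∧ c₀ ≤ ‖y‖ ∧ ‖y‖ ≤ C₀ ∧
      c₀ ≤ |x 0 * y 1 - x 1 * y 0| ∧ |x 0 * y 1 - x 1 * y 0| ≤ C₀)
    (ψ : Matrix (Fin 2) (Fin 2) ℝ → ℝ) (hψ : ContDiff ℝ (⊤ : ℕ∞) ψ)
    (hψc : HasCompactSupport ψ)
    (lam : Measure (Matrix.SpecialLinearGroup (Fin 2) ℝ)) (hlam0 : lam ≠ 0)
    (hlamfin : IsFiniteMeasureOnCompacts lam)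
    (hinv : ∀ g₀ : Matrix.SpecialLinearGroup (Fin 2) ℝ,
      lam.map (fun g => g * g₀) = lam) :
    ∃ K : ℝ, 1 ≤ K ∧ ∀ N : ℕ, ∃ C : ℝ, 0 < C ∧
      ∀ ξ η : EuclideanSpace ℝ (Fin 2), 1 ≤ max ‖ξ‖ ‖η‖ →
        ¬(K⁻¹ * ‖η‖ ≤ ‖ξ‖ ∧ ‖ξ‖ ≤ K * ‖η‖ ∧
          K⁻¹ * max ‖ξ‖ ‖η‖ ^ 2 ≤ |ξ 0 * η 1 - ξ 1 * η 0|) →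
        ‖∫ g : Matrix.SpecialLinearGroup (Fin 2) ℝ,
            measureFT μ₁ (Matrix.toEuclideanLin ((g : Matrix (Fin 2) (Fin 2) ℝ)) ξ)
              * measureFT μ₂ (Matrix.toEuclideanLin ((g : Matrix (Fin 2) (Fin 2) ℝ)) η)
              * (ψ (g : Matrix (Fin 2) (Fin 2) ℝ) : ℂ) ∂lam‖
          ≤ C * max ‖ξ‖ ‖η‖ ^ (-(N : ℝ)) := by
  obtain ⟨K, hK, hdecay⟩ := sl2_oscillatory_integral_rapid_decay_general (fun g => (ψ g : ℂ))
    (Complex.ofRealCLM.contDiff.comp hψ) (hψc.comp_left Complex.ofReal_zero) lam hinv c₀ C₀ hc₀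
  have hae : ∀ᵐ p ∂(μ₁.prod μ₂), p.1 ∈ S₁ ∧ p.2 ∈ S₂ :=
    (Measure.quasiMeasurePreserving_fst.ae hμ₁S).and (Measure.quasiMeasurePreserving_snd.ae hμ₂S)
  refine ⟨K, hK, fun N => ?_⟩
  obtain ⟨C, hC, hbound⟩ := hdecay N
  refine ⟨C, hC, fun ξ η hmax hξη => ?_⟩
  have hgeom' := hae.mono fun p hp => hgeom p.1 hp.1 p.2 hp.2
  simpa using hbound μ₁ μ₂ (hgeom'.mono fun p ⟨_, hx, _, hy, hxy, _⟩ => ⟨hx, hy, hxy⟩) ξ η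
    (zero_lt_one.trans_le hmax) hξη
end

section
/- Let μ_E, μ_F, μ_H be compactly supported Borel probability measures on ℝ² satisfying the Frostman conditions μ_E(B(x,r)) ≤ A r^{s_E}, μ_F(B(x,r)) ≤ A r^{s_F}, μ_H(B(x,r)) ≤ A r^{s_H} for all x ∈ ℝ² and r > 0, with 0 < s_E, s_F, s_H ≤ 2. Let ψ be a nonnegative continuous compactly supported function on SL₂(ℝ) and λ a right Haar measure on SL₂(ℝ). Then there is a constant C such that for every integer j ≥ 0, ∬_{2^j ≤ |ξ| ≤ 2^{j+1}, 2^j ≤ |η| ≤ 2^{j+1}} |μ̂_E(ξ)| |μ̂_F(η)| |μ̂_H(η)| ( ∫_{SL₂(ℝ)} |μ̂_E(gξ)| |μ̂_F(gη)| |μ̂_H(gη)| ψ(g) dλ(g) ) dξ dη ≤ C · 2^{j(4 − s_E − s_F − s_H)}. -/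
open MeasureTheory Metric
open scoped ENNReal RealInnerProductSpace

/-!
Integrating `|μ̂|²` against a Gaussian of width `R` turns it into `R²` times the mean of a Gaussian
in `R |x - y|` over `μ × μ`, so a measure of Frostman exponent `s` has
`∫_{|ξ| ≤ cR} |μ̂|² ≲ R^(2-s)`.

For fixed `g` the integrals over `ξ` and `η` separate. The `ξ`-integral is `≲ R^(2-s_E)`, by
Cauchy–Schwarz and because `g` preserves area. For the `η`-integral, the average over `g` in the
compact support of `ψ` is taken first: `gη` is then distributed with density `≲ |η|⁻²`, since
`SL₂(ℝ)` is transitive on nonzero vectors and `λ` is right invariant. This bounds it by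
`R⁻² (∫ |μ̂_F| |μ̂_H|)² ≲ R⁻² R^(2-s_F) R^(2-s_H)`.
-/

open scoped NNReal Pointwise

section Frostman

/-- A measure is Frostman of exponent `s` if a closed ball of radius `r` has mass `O(r ^ s)`,
uniformly in its centre. -/
def IsFrostman {X : Type*} [PseudoMetricSpace X] [MeasurableSpace X] (s : ℝ) (μ : Measure X) :
    Prop :=
  ∃ A : ℝ≥0, ∀ (x : X) (r : ℝ), 0 < r → μ (closedBall x r) ≤ A * ENNReal.ofReal (r ^ s)

theorem isFrostman_of_le_ofReal {X : Type*} [PseudoMetricSpace X] [MeasurableSpace X] {s A : ℝ}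
    {μ : Measure X}
    (h : ∀ (x : X) (r : ℝ), 0 < r → μ (closedBall x r) ≤ ENNReal.ofReal (A * r ^ s)) :
    IsFrostman s μ :=
  ⟨A.toNNReal, fun x r hr => (h x r hr).trans_eq (ENNReal.ofReal_mul' (by positivity))⟩

theorem IsFrostman.map_smul {V : Type*} [NormedAddCommGroup V] [NormedSpace ℝ V]
    [MeasurableSpace V] [BorelSpace V] {s : ℝ} {μ : Measure V} (hμ : IsFrostman s μ)
    {c : ℝ} (hc : c ≠ 0) : IsFrostman s (μ.map (c • ·)) := by
  obtain ⟨A, hA⟩ := hμ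
  refine ⟨A * (|c|⁻¹ ^ s).toNNReal, fun x r hr => ?_⟩
  have hpre : (c • ·) ⁻¹' closedBall x r = closedBall (c⁻¹ • x) (|c|⁻¹ * r) := by
    rw [Set.preimage_smul₀ hc, _root_.smul_closedBall' (inv_ne_zero hc), norm_inv,
      Real.norm_eq_abs]
  rw [Measure.map_apply (measurable_const_smul c) measurableSet_closedBall, hpre]
  refine (hA _ _ (by positivity)).trans_eq ?_
  rw [Real.mul_rpow (by positivity) hr.le, ENNReal.ofReal_mul (by positivity), ENNReal.coe_mul,
    mul_assoc]
  rfl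

variable {X : Type*} [PseudoMetricSpace X]

theorem le_tsum_mul_indicator_closedBall {φ : ℝ → ℝ≥0∞} (hφ : AntitoneOn φ (Set.Ici 0)) {R : ℝ}
    (hR : 0 < R) (x y : X) :
    φ (R * dist x y) ≤
      ∑' k : ℕ, φ k * (closedBall x (((k : ℝ) + 1) / R)).indicator 1 y := by
  set k := ⌊R * dist x y⌋₊
  have hmem : y ∈ closedBall x (((k : ℝ) + 1) / R) := by
    rw [mem_closedBall', le_div_iff₀' hR]
    exact (Nat.lt_floor_add_one _).le
  calc φ (R * dist x y) ≤ φ k :=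
        hφ (Set.mem_Ici.2 k.cast_nonneg) (Set.mem_Ici.2 (by positivity))
          (Nat.floor_le (by positivity))
    _ = φ k * (closedBall x (((k : ℝ) + 1) / R)).indicator 1 y := by
        rw [Set.indicator_of_mem hmem, Pi.one_apply, mul_one]
    _ ≤ _ := ENNReal.le_tsum k

variable [MeasurableSpace X] [OpensMeasurableSpace X] {s : ℝ} {μ : Measure X}

theorem IsFrostman.exists_lintegral_comp_dist_le (hμ : IsFrostman s μ) :
    ∃ A : ℝ≥0, ∀ φ : ℝ → ℝ≥0∞, AntitoneOn φ (Set.Ici 0) → ∀ R : ℝ, 0 < R → ∀ x : X,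
      ∫⁻ y, φ (R * dist x y) ∂μ ≤
        A * ENNReal.ofReal (R ^ (-s)) * ∑' k : ℕ, φ k * ENNReal.ofReal (((k : ℝ) + 1) ^ s) := by
  obtain ⟨A, hA⟩ := hμ
  refine ⟨A, fun φ hφ R hR x => ?_⟩
  have hball (k : ℕ) : μ (closedBall x (((k : ℝ) + 1) / R)) ≤
      A * ENNReal.ofReal (R ^ (-s)) * ENNReal.ofReal (((k : ℝ) + 1) ^ s) := by
    refine (hA x _ (by positivity)).trans_eq ?_
    rw [Real.div_rpow (by positivity) hR.le, div_eq_inv_mul, ← Real.rpow_neg hR.le,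
      ENNReal.ofReal_mul (by positivity), mul_assoc]
  calc ∫⁻ y, φ (R * dist x y) ∂μ
      ≤ ∫⁻ y, ∑' k : ℕ, φ k * (closedBall x (((k : ℝ) + 1) / R)).indicator 1 y ∂μ :=
        lintegral_mono fun y => le_tsum_mul_indicator_closedBall hφ hR x y
    _ = ∑' k : ℕ, φ k * μ (closedBall x (((k : ℝ) + 1) / R)) := by
        have hmeas (k : ℕ) : Measurable ((closedBall x (((k : ℝ) + 1) / R)).indicator 1) :=
          measurable_one.indicator (β := ℝ≥0∞) measurableSet_closedBall
        rw [lintegral_tsum fun k => ((hmeas k).const_mul _).aemeasurable]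
        refine tsum_congr fun k => ?_
        rw [lintegral_const_mul _ (hmeas k), lintegral_indicator_one measurableSet_closedBall]
    _ ≤ ∑' k : ℕ, φ k * (A * ENNReal.ofReal (R ^ (-s)) * ENNReal.ofReal (((k : ℝ) + 1) ^ s)) :=
        ENNReal.tsum_le_tsum fun k => by gcongr; exact hball k
    _ = _ := by
        rw [← ENNReal.tsum_mul_left]
        exact tsum_congr fun k => mul_left_comm _ _ _

theorem summable_exp_neg_sq_mul_rpow (s : ℝ) :
    Summable fun k : ℕ => Real.exp (-(k : ℝ) ^ 2 / 4) * ((k : ℝ) + 1) ^ s := by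
  have hexp : Summable fun k : ℕ => ((k + 1 : ℕ) : ℝ) ^ ⌈s⌉₊ * Real.exp (-1 * (k + 1 : ℕ)) :=
    (summable_nat_add_iff 1).2 (Real.summable_pow_mul_exp_neg_nat_mul ⌈s⌉₊ one_pos)
  refine .of_nonneg_of_le (fun k => by positivity) (fun k => ?_) (hexp.mul_left (Real.exp 2))
  have hgauss : Real.exp (-(k : ℝ) ^ 2 / 4) ≤ Real.exp 2 * Real.exp (-1 * (k + 1 : ℕ)) := by
    rw [← Real.exp_add, Real.exp_le_exp]
    push_cast
    linarith [sq_nonneg ((k : ℝ) / 2 - 1)]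
  have hpow : ((k : ℝ) + 1) ^ s ≤ ((k + 1 : ℕ) : ℝ) ^ ⌈s⌉₊ := by
    rw [← Real.rpow_natCast, Nat.cast_add_one]
    exact Real.rpow_le_rpow_of_exponent_le (by linarith [k.cast_nonneg (α := ℝ)]) (Nat.le_ceil s)
  calc _ ≤ Real.exp 2 * Real.exp (-1 * (k + 1 : ℕ)) * ((k + 1 : ℕ) : ℝ) ^ ⌈s⌉₊ := by gcongr
    _ = _ := by ring

theorem IsFrostman.exists_lintegral_exp_neg_sq_dist_le (hμ : IsFrostman s μ) :
    ∃ C : ℝ≥0, ∀ R : ℝ, 0 < R → ∀ x : X,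
      ∫⁻ y, ENNReal.ofReal (Real.exp (-(R * dist x y) ^ 2 / 4)) ∂μ ≤
        C * ENNReal.ofReal (R ^ (-s)) := by
  obtain ⟨A, hA⟩ := hμ.exists_lintegral_comp_dist_le
  have hanti : AntitoneOn (fun t : ℝ => ENNReal.ofReal (Real.exp (-t ^ 2 / 4))) (Set.Ici 0) := by
    intro t ht u _ htu
    have : t ^ 2 ≤ u ^ 2 := pow_le_pow_left₀ ht htu 2
    dsimp only
    gcongr
  set S := ∑' k : ℕ, ENNReal.ofReal (Real.exp (-(k : ℝ) ^ 2 / 4)) *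
    ENNReal.ofReal (((k : ℝ) + 1) ^ s) with hS
  have hfin : S ≠ ∞ := by
    simp_rw [hS, ← ENNReal.ofReal_mul (Real.exp_pos _).le]
    exact (summable_exp_neg_sq_mul_rpow s).tsum_ofReal_ne_top
  refine ⟨A * S.toNNReal, fun R hR x => (hA _ hanti R hR x).trans_eq ?_⟩
  rw [ENNReal.coe_mul, ENNReal.coe_toNNReal hfin, mul_right_comm]

end Frostman

section CharFun

variable {V : Type*} [NormedAddCommGroup V] [InnerProductSpace ℝ V] [FiniteDimensional ℝ V]
  [MeasurableSpace V] [BorelSpace V]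

theorem integral_charFun_mul_exp_neg_mul_sq_norm (ν : Measure V) [IsFiniteMeasure ν] {b : ℝ}
    (hb : 0 < b) :
    ∫ t, charFun ν t * (Real.exp (-b * ‖t‖ ^ 2) : ℂ) =
      (Real.pi / b : ℂ) ^ (Module.finrank ℝ V / 2 : ℂ) *
        ∫ x, (Real.exp (-‖x‖ ^ 2 / (4 * b)) : ℂ) ∂ν := by
  have hbre : 0 < (b : ℂ).re := hb
  have hint : Integrable
      (Function.uncurry fun (t x : V) => Complex.exp (-b * ‖t‖ ^ 2 + Complex.I * ⟪x, t⟫))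
      (volume.prod ν) := by
    have hgauss := GaussianFourier.integrable_cexp_neg_mul_sq_norm_add hbre 0 (0 : V)
    refine (hgauss.comp_fst ν).mono (by fun_prop) (.of_forall fun p => le_of_eq ?_)
    simp [Function.uncurry_def, Complex.norm_exp]
  calc ∫ t, charFun ν t * (Real.exp (-b * ‖t‖ ^ 2) : ℂ)
      = ∫ t, ∫ x, Complex.exp (-b * ‖t‖ ^ 2 + Complex.I * ⟪x, t⟫) ∂ν := by
        refine integral_congr_ae (.of_forall fun t => ?_)
        simp only [charFun_apply, ← integral_mul_const, Complex.ofReal_exp, ← Complex.exp_add]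
        push_cast
        simp only [add_comm, mul_comm Complex.I]
    _ = ∫ x, (∫ t, Complex.exp (-b * ‖t‖ ^ 2 + Complex.I * ⟪x, t⟫)) ∂ν :=
        integral_integral_swap hint
    _ = _ := by
        rw [← integral_const_mul]
        refine integral_congr_ae (.of_forall fun x => ?_)
        simp only [GaussianFourier.integral_cexp_neg_mul_sq_norm_add hbre Complex.I x]
        push_cast
        simp only [Complex.I_sq, neg_one_mul]

theorem charFun_map_sub_prod_self {W : Type*} [NormedAddCommGroup W] [InnerProductSpace ℝ W]
    [SecondCountableTopology W] [MeasurableSpace W] [BorelSpace W] (μ : Measure W) [SFinite μ]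
    (t : W) :
    charFun ((μ.prod μ).map fun p => p.1 - p.2) t = ((‖charFun μ t‖ ^ 2 : ℝ) : ℂ) := by
  rw [Complex.ofReal_pow, ← Complex.mul_conj', ← charFun_neg, charFun_apply,
    integral_map (by fun_prop) (by fun_prop), charFun_apply, charFun_apply, ← integral_prod_mul]
  refine integral_congr_ae (.of_forall fun p => ?_)
  simp only [← Complex.exp_add, inner_sub_left, inner_neg_right]
  push_cast
  ring_nf

theorem integral_norm_charFun_sq_mul_exp_neg_mul_sq_norm (μ : Measure V) [IsFiniteMeasure μ]
    {b : ℝ} (hb : 0 < b) :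
    ∫ t, ‖charFun μ t‖ ^ 2 * Real.exp (-b * ‖t‖ ^ 2) =
      (Real.pi / b) ^ (Module.finrank ℝ V / 2 : ℝ) *
        ∫ p : V × V, Real.exp (-dist p.1 p.2 ^ 2 / (4 * b)) ∂μ.prod μ := by
  have h := integral_charFun_mul_exp_neg_mul_sq_norm ((μ.prod μ).map fun p => p.1 - p.2) hb
  rw [integral_map (by fun_prop) (by fun_prop)] at h
  simp only [charFun_map_sub_prod_self, ← dist_eq_norm, ← Complex.ofReal_mul,
    integral_complex_ofReal] at h
  apply Complex.ofReal_injective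
  rw [h, Complex.ofReal_mul, Complex.ofReal_cpow (by positivity)]
  push_cast
  rfl

theorem integrable_norm_charFun_sq_mul_exp_neg_mul_sq_norm (μ : Measure V) [IsFiniteMeasure μ]
    {b : ℝ} (hb : 0 < b) :
    Integrable fun t => ‖charFun μ t‖ ^ 2 * Real.exp (-b * ‖t‖ ^ 2) := by
  have hgauss : Integrable fun t : V => Real.exp (-b * ‖t‖ ^ 2) := by
    have h := (GaussianFourier.integrable_cexp_neg_mul_sq_norm_add (b := b) hb 0 (0 : V)).norm
    simpa [Complex.norm_exp, ← Complex.ofReal_pow] using h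
  refine hgauss.bdd_mul (c := μ.real Set.univ ^ 2)
    (measurable_charFun.norm.pow_const 2).aestronglyMeasurable (.of_forall fun t => ?_)
  rw [norm_pow, norm_norm]
  exact pow_le_pow_left₀ (norm_nonneg _) (norm_charFun_le t) 2

theorem lintegral_enorm_charFun_sq_mul_exp_neg_mul_sq_norm (μ : Measure V) [IsFiniteMeasure μ]
    {b : ℝ} (hb : 0 < b) :
    ∫⁻ t, ‖charFun μ t‖ₑ ^ 2 * ENNReal.ofReal (Real.exp (-b * ‖t‖ ^ 2)) =
      ENNReal.ofReal ((Real.pi / b) ^ (Module.finrank ℝ V / 2 : ℝ)) *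
        ∫⁻ x, ∫⁻ y, ENNReal.ofReal (Real.exp (-dist x y ^ 2 / (4 * b))) ∂μ ∂μ := by
  have hkernel : Integrable (fun p : V × V => Real.exp (-dist p.1 p.2 ^ 2 / (4 * b)))
      (μ.prod μ) := by
    refine (integrable_const (1 : ℝ)).mono (by fun_prop) (.of_forall fun p => ?_)
    rw [Real.norm_of_nonneg (Real.exp_pos _).le, norm_one, Real.exp_le_one_iff, neg_div]
    exact neg_nonpos.2 (by positivity)
  simp_rw [← ofReal_norm, ← ENNReal.ofReal_pow (norm_nonneg _),
    ← ENNReal.ofReal_mul (sq_nonneg _)]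
  rw [← ofReal_integral_eq_lintegral_ofReal
      (integrable_norm_charFun_sq_mul_exp_neg_mul_sq_norm μ hb) (.of_forall fun t => by positivity),
    integral_norm_charFun_sq_mul_exp_neg_mul_sq_norm μ hb, ENNReal.ofReal_mul (by positivity),
    ofReal_integral_eq_lintegral_ofReal hkernel (.of_forall fun p => by positivity),
    lintegral_prod _ (by fun_prop)]

theorem lintegral_closedBall_enorm_charFun_sq_le (μ : Measure V) [IsFiniteMeasure μ] {R : ℝ}
    (hR : 0 < R) :
    ∫⁻ t in closedBall 0 R, ‖charFun μ t‖ₑ ^ 2 ≤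
      ENNReal.ofReal (Real.exp 1 * Real.pi ^ (Module.finrank ℝ V / 2 : ℝ)) *
        ENNReal.ofReal (R ^ Module.finrank ℝ V) *
        ∫⁻ x, ∫⁻ y, ENNReal.ofReal (Real.exp (-(R * dist x y) ^ 2 / 4)) ∂μ ∂μ := by
  have hb : 0 < (R ^ 2)⁻¹ := by positivity
  have hweight : ∀ t ∈ closedBall (0 : V) R,
      1 ≤ ENNReal.ofReal (Real.exp 1) * ENNReal.ofReal (Real.exp (-(R ^ 2)⁻¹ * ‖t‖ ^ 2)) := by
    intro t ht
    rw [← ENNReal.ofReal_mul (Real.exp_pos _).le, ENNReal.one_le_ofReal, ← Real.exp_add,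
      Real.one_le_exp_iff, neg_mul, ← sub_eq_add_neg, sub_nonneg, inv_mul_le_one₀ (by positivity)]
    exact pow_le_pow_left₀ (norm_nonneg _) (mem_closedBall_zero_iff.1 ht) 2
  have hscale : (Real.pi / (R ^ 2)⁻¹) ^ (Module.finrank ℝ V / 2 : ℝ) =
      Real.pi ^ (Module.finrank ℝ V / 2 : ℝ) * R ^ Module.finrank ℝ V := by
    rw [div_inv_eq_mul, Real.mul_rpow (by positivity) (by positivity), ← Real.rpow_natCast R 2,
      ← Real.rpow_mul hR.le, Nat.cast_ofNat, mul_div_cancel₀ _ two_ne_zero, Real.rpow_natCast]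
  have hexponent (x y : V) :
      -dist x y ^ 2 / (4 * (R ^ 2)⁻¹) = -(R * dist x y) ^ 2 / 4 := by field_simp
  calc ∫⁻ t in closedBall 0 R, ‖charFun μ t‖ₑ ^ 2
      ≤ ∫⁻ t in closedBall 0 R, ENNReal.ofReal (Real.exp 1) *
          (‖charFun μ t‖ₑ ^ 2 * ENNReal.ofReal (Real.exp (-(R ^ 2)⁻¹ * ‖t‖ ^ 2))) :=
        setLIntegral_mono' measurableSet_closedBall fun t ht => by
          rw [mul_left_comm]
          exact le_mul_of_one_le_right' (hweight t ht)
    _ ≤ ENNReal.ofReal (Real.exp 1) *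
          ∫⁻ t, ‖charFun μ t‖ₑ ^ 2 * ENNReal.ofReal (Real.exp (-(R ^ 2)⁻¹ * ‖t‖ ^ 2)) := by
        rw [← lintegral_const_mul' _ _ ENNReal.ofReal_ne_top]
        exact setLIntegral_le_lintegral _ _
    _ = _ := by
        rw [lintegral_enorm_charFun_sq_mul_exp_neg_mul_sq_norm μ hb, hscale, ← mul_assoc,
          ← ENNReal.ofReal_mul (by positivity), ← mul_assoc, ENNReal.ofReal_mul (by positivity)]
        simp only [hexponent]

theorem IsFrostman.exists_lintegral_closedBall_enorm_charFun_sq_le {s : ℝ} {μ : Measure V}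
    [IsFiniteMeasure μ] (hμ : IsFrostman s μ) :
    ∃ C : ℝ≥0, ∀ R : ℝ, 0 < R → ∫⁻ t in closedBall 0 R, ‖charFun μ t‖ₑ ^ 2 ≤
      C * ENNReal.ofReal (R ^ (Module.finrank ℝ V - s)) := by
  obtain ⟨A, hA⟩ := hμ.exists_lintegral_exp_neg_sq_dist_le
  refine ⟨(Real.exp 1 * Real.pi ^ (Module.finrank ℝ V / 2 : ℝ)).toNNReal * A *
    (μ Set.univ).toNNReal, fun R hR => ?_⟩
  have hpow : ENNReal.ofReal (R ^ (Module.finrank ℝ V - s)) =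
      ENNReal.ofReal (R ^ Module.finrank ℝ V) * ENNReal.ofReal (R ^ (-s)) := by
    rw [← ENNReal.ofReal_mul (by positivity), sub_eq_add_neg, Real.rpow_add hR,
      Real.rpow_natCast]
  refine (lintegral_closedBall_enorm_charFun_sq_le μ hR).trans ?_
  calc _ ≤ ENNReal.ofReal (Real.exp 1 * Real.pi ^ (Module.finrank ℝ V / 2 : ℝ)) *
          ENNReal.ofReal (R ^ Module.finrank ℝ V) * ∫⁻ _, A * ENNReal.ofReal (R ^ (-s)) ∂μ := by
        gcongr with x
        exact hA R hR x
    _ = _ := by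
        rw [lintegral_const, hpow, ENNReal.coe_mul, ENNReal.coe_mul,
          ENNReal.coe_toNNReal (measure_ne_top _ _), ← ENNReal.ofReal]
        ring

end CharFun

section Lintegral

theorem sq_lintegral_mul_le {X : Type*} [MeasurableSpace X] (μ : Measure X) {f g : X → ℝ≥0∞}
    (hf : AEMeasurable f μ) (hg : AEMeasurable g μ) :
    (∫⁻ x, f x * g x ∂μ) ^ 2 ≤ (∫⁻ x, f x ^ 2 ∂μ) * ∫⁻ x, g x ^ 2 ∂μ := by
  have hsqrt (z : ℝ≥0∞) : (z ^ (1 / 2 : ℝ)) ^ 2 = z := by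
    rw [← ENNReal.rpow_two, ← ENNReal.rpow_mul, one_div, inv_mul_cancel₀ two_ne_zero,
      ENNReal.rpow_one]
  calc (∫⁻ x, f x * g x ∂μ) ^ 2
      ≤ ((∫⁻ x, f x ^ (2 : ℝ) ∂μ) ^ (1 / 2 : ℝ) *
          (∫⁻ x, g x ^ (2 : ℝ) ∂μ) ^ (1 / 2 : ℝ)) ^ 2 := by
        gcongr
        exact ENNReal.lintegral_mul_le_Lp_mul_Lq μ .two_two hf hg
    _ = _ := by simp only [mul_pow, hsqrt, ENNReal.rpow_two]

theorem lintegral_lintegral_lintegral_mul {G X Y : Type*} [MeasurableSpace G] [MeasurableSpace X]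
    [MeasurableSpace Y] {lam : Measure G} {μ : Measure X} {ν : Measure Y} [SFinite lam]
    [SFinite μ] [SFinite ν] {p : G → X → ℝ≥0∞} {q : G → Y → ℝ≥0∞}
    (hp : Measurable (Function.uncurry p)) (hq : Measurable (Function.uncurry q)) :
    ∫⁻ x, ∫⁻ y, ∫⁻ g, p g x * q g y ∂lam ∂ν ∂μ =
      ∫⁻ g, (∫⁻ x, p g x ∂μ) * (∫⁻ y, q g y ∂ν) ∂lam := by
  have hQ : Measurable fun g => ∫⁻ y, q g y ∂ν := hq.lintegral_prod_right'
  calc ∫⁻ x, ∫⁻ y, ∫⁻ g, p g x * q g y ∂lam ∂ν ∂μ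
      = ∫⁻ x, ∫⁻ g, p g x * ∫⁻ y, q g y ∂ν ∂lam ∂μ := by
        refine lintegral_congr fun x => ?_
        rw [lintegral_lintegral_swap]
        · exact lintegral_congr fun g => lintegral_const_mul _ (hq.comp measurable_prodMk_left)
        · exact (((hp.comp measurable_prodMk_right).comp measurable_snd).mul
            (hq.comp measurable_swap)).aemeasurable
    _ = ∫⁻ g, ∫⁻ x, p g x * ∫⁻ y, q g y ∂ν ∂μ ∂lam :=
        lintegral_lintegral_swap
          ((hp.comp measurable_swap).mul (hQ.comp measurable_snd)).aemeasurable
    _ = _ := lintegral_congr fun g => lintegral_mul_const _ (hp.comp measurable_prodMk_left)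

end Lintegral

section Action

variable {G X : Type*} [Group G] [MulAction G X] [MeasurableSpace X] {ν : Measure X}

theorem setLIntegral_mul_comp_smul_le [MeasurableConstSMul G X] [SMulInvariantMeasure G X ν]
    {a : X → ℝ≥0∞} (ha : Measurable a) {S D : Set X} {g : G} (hSD : S ⊆ D)
    (hgSD : Set.MapsTo (g • ·) S D) :
    ∫⁻ ξ in S, a ξ * a (g • ξ) ∂ν ≤ ∫⁻ ξ in D, a ξ ^ 2 ∂ν := by
  have hshift : ∫⁻ ξ in S, a (g • ξ) ^ 2 ∂ν ≤ ∫⁻ ξ in D, a ξ ^ 2 ∂ν := by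
    rw [← (measurePreserving_smul g ν).setLIntegral_comp_preimage_emb
      (measurableEmbedding_const_smul g) (fun ξ => a ξ ^ 2)]
    exact lintegral_mono_set hgSD
  refine (ENNReal.pow_le_pow_left_iff two_ne_zero).1 ?_
  calc (∫⁻ ξ in S, a ξ * a (g • ξ) ∂ν) ^ 2
      ≤ (∫⁻ ξ in S, a ξ ^ 2 ∂ν) * ∫⁻ ξ in S, a (g • ξ) ^ 2 ∂ν :=
        sq_lintegral_mul_le _ ha.aemeasurable (ha.comp (measurable_const_smul g)).aemeasurable
    _ ≤ (∫⁻ ξ in D, a ξ ^ 2 ∂ν) * ∫⁻ ξ in D, a ξ ^ 2 ∂ν := by gcongr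
    _ = _ := (sq _).symm

variable [MeasurableSpace G] {lam : Measure G}

/- Right translation by `h⁻¹` carries `K` into `K * L⁻¹` and turns the orbit map of `u` into that of
`h • u`. Averaging over all `h • u ∈ Y` and swapping integrals replaces the pushforward by `ν`. -/
theorem measure_smul_map_smul_restrict_le [MeasurableMul G] [MeasurableSMul₂ G X] [SFinite lam]
    [lam.IsMulRightInvariant] [SFinite ν] [SMulInvariantMeasure G X ν] {K L : Set G}
    {Y : Set X} {u : X} (hY : ∀ y ∈ Y, ∃ h ∈ L, h • u = y) :
    ν Y • (lam.restrict K).map (· • u) ≤ lam (K * L⁻¹) • ν := by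
  refine Measure.le_iff.2 fun s hs => ?_
  have hP : MeasurableSet {p : G × X | p.1 • p.2 ∈ s} := measurable_smul hs
  have htransport : ∀ y ∈ Y, (lam.restrict K).map (· • u) s ≤
      lam.restrict (K * L⁻¹) ((· • y) ⁻¹' s) := by
    intro y hy
    obtain ⟨h, hh, rfl⟩ := hY y hy
    rw [Measure.map_apply (measurable_smul_const u) hs,
      Measure.restrict_apply (measurable_smul_const u hs),
      Measure.restrict_apply (measurable_smul_const (h • u) hs),
      ← measure_preimage_mul_right lam h]
    refine measure_mono fun k hk => ⟨?_, k * h, hk.2, h⁻¹, Set.inv_mem_inv.2 hh, by simp⟩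
    simpa only [Set.mem_preimage, smul_smul] using hk.1
  calc (ν Y • (lam.restrict K).map (· • u)) s
      = ∫⁻ _ in Y, (lam.restrict K).map (· • u) s ∂ν := by
        rw [setLIntegral_const, mul_comm, Measure.smul_apply, smul_eq_mul]
    _ ≤ ∫⁻ y in Y, lam.restrict (K * L⁻¹) ((· • y) ⁻¹' s) ∂ν :=
        setLIntegral_mono (measurable_measure_prodMk_right hP) htransport
    _ ≤ ∫⁻ y, lam.restrict (K * L⁻¹) ((· • y) ⁻¹' s) ∂ν := setLIntegral_le_lintegral _ _
    _ = ∫⁻ k in K * L⁻¹, ν ((k • ·) ⁻¹' s) ∂lam :=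
        (Measure.prod_apply_symm hP).symm.trans (Measure.prod_apply hP)
    _ = (lam (K * L⁻¹) • ν) s := by
        simp only [SMulInvariantMeasure.measure_preimage_smul _ hs, lintegral_const,
          Measure.restrict_apply_univ, mul_comm, Measure.smul_apply, smul_eq_mul]

theorem lintegral_setLIntegral_mul_comp_smul_le [MeasurableSMul₂ G X] [SFinite lam] [SFinite ν]
    {b : X → ℝ≥0∞} (hb : Measurable b) {S D : Set X} {K : Set G} {κ : ℝ≥0∞}
    (hS : MeasurableSet S) (hD : MeasurableSet D) (hK : MeasurableSet K) (hSD : S ⊆ D)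
    (hKSD : ∀ g ∈ K, Set.MapsTo (g • ·) S D)
    (hκ : ∀ η ∈ S, (lam.restrict K).map (· • η) ≤ κ • ν) :
    ∫⁻ g in K, ∫⁻ η in S, b η * b (g • η) ∂ν ∂lam ≤ κ * (∫⁻ η in D, b η ∂ν) ^ 2 := by
  have horbit : ∀ η ∈ S, ∫⁻ g in K, b (g • η) ∂lam ≤ κ * ∫⁻ y in D, b y ∂ν := fun η hη => by
    calc ∫⁻ g in K, b (g • η) ∂lam = ∫⁻ g in K, D.indicator b (g • η) ∂lam :=
          setLIntegral_congr_fun hK fun g hg => by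
            rw [Set.indicator_of_mem (hKSD g hg hη)]
      _ = ∫⁻ y, D.indicator b y ∂(lam.restrict K).map (· • η) :=
          (lintegral_map (hb.indicator hD) (measurable_smul_const η)).symm
      _ ≤ ∫⁻ y, D.indicator b y ∂(κ • ν) := lintegral_mono' (hκ η hη) le_rfl
      _ = κ * ∫⁻ y in D, b y ∂ν := by
          rw [lintegral_smul_measure, lintegral_indicator hD, smul_eq_mul]
  calc ∫⁻ g in K, ∫⁻ η in S, b η * b (g • η) ∂ν ∂lam
      = ∫⁻ η in S, b η * ∫⁻ g in K, b (g • η) ∂lam ∂ν := by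
        rw [lintegral_lintegral_swap (by fun_prop)]
        exact lintegral_congr fun η =>
          lintegral_const_mul _ (hb.comp (measurable_smul_const η))
    _ ≤ ∫⁻ η in S, b η * (κ * ∫⁻ y in D, b y ∂ν) ∂ν :=
        setLIntegral_mono' hS fun η hη => by gcongr; exact horbit η hη
    _ = (∫⁻ η in S, b η ∂ν) * (κ * ∫⁻ y in D, b y ∂ν) := lintegral_mul_const _ hb
    _ ≤ (∫⁻ η in D, b η ∂ν) * (κ * ∫⁻ y in D, b y ∂ν) := by gcongr
    _ = _ := by ring

theorem lintegral_lintegral_lintegral_mul_comp_smul_le [MeasurableSMul₂ G X] [SFinite lam]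
    [SFinite ν] [SMulInvariantMeasure G X ν] {a b : X → ℝ≥0∞} (ha : Measurable a)
    (hb : Measurable b) {S D : Set X} {K : Set G} {κ : ℝ≥0∞}
    (hS : MeasurableSet S) (hD : MeasurableSet D) (hK : MeasurableSet K) (hSD : S ⊆ D)
    (hKSD : ∀ g ∈ K, Set.MapsTo (g • ·) S D)
    (hκ : ∀ η ∈ S, (lam.restrict K).map (· • η) ≤ κ • ν) :
    ∫⁻ ξ in S, ∫⁻ η in S, ∫⁻ g in K, (a ξ * a (g • ξ)) * (b η * b (g • η)) ∂lam ∂ν ∂ν ≤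
      κ * (∫⁻ ξ in D, a ξ ^ 2 ∂ν) * (∫⁻ η in D, b η ∂ν) ^ 2 := by
  rw [lintegral_lintegral_lintegral_mul (p := fun g ξ => a ξ * a (g • ξ))
    (q := fun g η => b η * b (g • η)) (by fun_prop) (by fun_prop)]
  calc ∫⁻ g in K, (∫⁻ ξ in S, a ξ * a (g • ξ) ∂ν) * (∫⁻ η in S, b η * b (g • η) ∂ν) ∂lam
      ≤ ∫⁻ g in K, (∫⁻ ξ in D, a ξ ^ 2 ∂ν) * (∫⁻ η in S, b η * b (g • η) ∂ν) ∂lam :=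
        setLIntegral_mono' hK fun g hg =>
          mul_le_mul' (setLIntegral_mul_comp_smul_le ha hSD (hKSD g hg)) le_rfl
    _ = (∫⁻ ξ in D, a ξ ^ 2 ∂ν) * ∫⁻ g in K, ∫⁻ η in S, b η * b (g • η) ∂ν ∂lam :=
        lintegral_const_mul _ <| Measurable.lintegral_prod_right'
          (f := fun p : G × X => b p.2 * b (p.1 • p.2)) (by fun_prop)
    _ ≤ (∫⁻ ξ in D, a ξ ^ 2 ∂ν) * (κ * (∫⁻ η in D, b η ∂ν) ^ 2) := by
        gcongr
        exact lintegral_setLIntegral_mul_comp_smul_le hb hS hD hK hSD hKSD hκ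
    _ = _ := by ring

end Action

theorem exists_forall_norm_smul_le {M V : Type*} [NormedAddCommGroup V] [NormedSpace ℝ V]
    [ProperSpace V] [TopologicalSpace M] [SMul M V] [SMulCommClass M ℝ V] [ContinuousSMul M V]
    {K : Set M} (hK : IsCompact K) :
    ∃ c : ℝ, 1 ≤ c ∧ ∀ g ∈ K, ∀ x : V, ‖g • x‖ ≤ c * ‖x‖ := by
  obtain ⟨c, hc⟩ := (hK.prod (isCompact_sphere (0 : V) 1)).exists_bound_of_continuousOn
    (f := fun p : M × V => p.1 • p.2) (by fun_prop)
  refine ⟨max 1 c, le_max_left 1 c, fun g hg x => ?_⟩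
  rcases eq_or_ne x 0 with rfl | hx
  · have hzero : g • (0 : V) = 0 := by simpa using smul_comm g (0 : ℝ) (0 : V)
    simp [hzero]
  · have hunit : ‖g • ‖x‖⁻¹ • x‖ ≤ c :=
      hc (g, ‖x‖⁻¹ • x) ⟨hg, by simp [norm_smul, norm_ne_zero_iff.2 hx]⟩
    rw [smul_comm, norm_smul, norm_inv, norm_norm, inv_mul_le_iff₀' (norm_pos_iff.2 hx)] at hunit
    exact hunit.trans (by gcongr; exact le_max_right 1 c)

local notation "ℝ²" => EuclideanSpace ℝ (Fin 2)

section FourierTransform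

theorem measureFT_eq_charFun_map (μ : Measure ℝ²) :
    measureFT μ = charFun (μ.map ((-2 * Real.pi) • ·)) := by
  ext ξ
  rw [charFun_map_smul, measureFT, charFun_apply]
  simp only [inner_smul_right]

theorem measurable_measureFT (μ : Measure ℝ²) [SFinite μ] : Measurable (measureFT μ) := by
  rw [measureFT_eq_charFun_map]
  exact measurable_charFun

theorem IsFrostman.exists_lintegral_closedBall_enorm_measureFT_sq_le {s c : ℝ} {μ : Measure ℝ²}
    [IsFiniteMeasure μ] (hμ : IsFrostman s μ) (hc : 0 < c) :
    ∃ C : ℝ≥0, ∀ R : ℝ, 0 < R → ∫⁻ ξ in closedBall 0 (c * R), ‖measureFT μ ξ‖ₑ ^ 2 ≤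
      C * ENNReal.ofReal (R ^ (2 - s)) := by
  have hpi : -2 * Real.pi ≠ 0 := mul_ne_zero (by norm_num) Real.pi_ne_zero
  obtain ⟨C, hC⟩ := (hμ.map_smul hpi).exists_lintegral_closedBall_enorm_charFun_sq_le
  refine ⟨C * (c ^ (2 - s)).toNNReal, fun R hR => ?_⟩
  rw [measureFT_eq_charFun_map]
  refine (hC (c * R) (by positivity)).trans_eq ?_
  rw [finrank_euclideanSpace_fin, Nat.cast_ofNat, Real.mul_rpow hc.le hR.le,
    ENNReal.ofReal_mul (by positivity), ENNReal.coe_mul, mul_assoc, ← ENNReal.ofReal]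

theorem IsFrostman.exists_sq_lintegral_closedBall_enorm_measureFT_mul_le {s t c : ℝ}
    {μ ν : Measure ℝ²} [IsFiniteMeasure μ] [IsFiniteMeasure ν] (hμ : IsFrostman s μ)
    (hν : IsFrostman t ν) (hc : 0 < c) :
    ∃ C : ℝ≥0, ∀ R : ℝ, 0 < R →
      (∫⁻ ξ in closedBall 0 (c * R), ‖measureFT μ ξ‖ₑ * ‖measureFT ν ξ‖ₑ) ^ 2 ≤
        C * ENNReal.ofReal (R ^ (4 - s - t)) := by
  obtain ⟨A, hA⟩ := hμ.exists_lintegral_closedBall_enorm_measureFT_sq_le hc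
  obtain ⟨B, hB⟩ := hν.exists_lintegral_closedBall_enorm_measureFT_sq_le hc
  refine ⟨A * B, fun R hR => ?_⟩
  calc (∫⁻ ξ in closedBall 0 (c * R), ‖measureFT μ ξ‖ₑ * ‖measureFT ν ξ‖ₑ) ^ 2
      ≤ (∫⁻ ξ in closedBall 0 (c * R), ‖measureFT μ ξ‖ₑ ^ 2) *
          ∫⁻ ξ in closedBall 0 (c * R), ‖measureFT ν ξ‖ₑ ^ 2 :=
        sq_lintegral_mul_le _ (measurable_measureFT μ).enorm.aemeasurable
          (measurable_measureFT ν).enorm.aemeasurable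
    _ ≤ (A * ENNReal.ofReal (R ^ (2 - s))) * (B * ENNReal.ofReal (R ^ (2 - t))) :=
        mul_le_mul' (hA R hR) (hB R hR)
    _ = _ := by
        rw [mul_mul_mul_comm, ← ENNReal.ofReal_mul (by positivity), ← Real.rpow_add hR,
          ENNReal.coe_mul]
        ring_nf

end FourierTransform

local notation "SL₂" => Matrix.SpecialLinearGroup (Fin 2) ℝ

section SpecialLinear

instance SL2T2Space : T2Space SL₂ :=
  inferInstanceAs (T2Space {A : Matrix (Fin 2) (Fin 2) ℝ // A.det = 1})

instance SL2BorelSpace : BorelSpace SL₂ := Subtype.borelSpace _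

instance SL2SigmaCompactSpace : SigmaCompactSpace SL₂ :=
  haveI : SigmaCompactSpace (Matrix (Fin 2) (Fin 2) ℝ) :=
    inferInstanceAs (SigmaCompactSpace (Fin 2 → Fin 2 → ℝ))
  Matrix.SpecialLinearGroup.isClosedEmbedding_val.sigmaCompactSpace

instance SL2IsTopologicalGroup : IsTopologicalGroup SL₂ :=
  Matrix.SpecialLinearGroup.topologicalGroup

theorem toEuclideanLin_coe_apply (g : SL₂) (x : ℝ²) :
    Matrix.toEuclideanLin (g : Matrix (Fin 2) (Fin 2) ℝ) x = g • x := rfl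

instance SL2ContinuousSMul : ContinuousSMul SL₂ ℝ² where
  continuous_smul := by
    have hval : Continuous fun p : SL₂ × ℝ² => (p.1 : Matrix (Fin 2) (Fin 2) ℝ) :=
      continuous_subtype_val.comp continuous_fst
    exact (PiLp.continuous_toLp 2 _).comp
      (hval.matrix_mulVec ((PiLp.continuous_ofLp 2 _).comp continuous_snd))

instance SL2SMulInvariantMeasure : SMulInvariantMeasure SL₂ ℝ² volume where
  measure_preimage_smul g s _ := by
    have hdet : LinearMap.det (Matrix.toEuclideanLin (g : Matrix (Fin 2) (Fin 2) ℝ)) = 1 := by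
      rw [LinearMap.det_toLpLin, g.det_coe]
    refine (Measure.addHaar_preimage_linearMap volume (hdet ▸ one_ne_zero) s).trans ?_
    rw [hdet, inv_one, abs_one, ENNReal.ofReal_one, one_mul]

theorem exists_isCompact_forall_smul_single_eq {Y : Set ℝ²} (hY : IsCompact Y) (h0 : 0 ∉ Y) :
    ∃ T : Set SL₂, IsCompact T ∧
      ∀ y ∈ Y, ∃ m ∈ T, m • (EuclideanSpace.single 0 1 : ℝ²) = y := by
  let frame (y : ℝ²) : Matrix (Fin 2) (Fin 2) ℝ :=
    !![y 0, -(y 1 / ‖y‖ ^ 2); y 1, y 0 / ‖y‖ ^ 2]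
  have hY0 : ∀ y ∈ Y, ‖y‖ ^ 2 ≠ 0 := fun y hy => by
    simpa using ne_of_mem_of_not_mem hy h0
  have hcont : ContinuousOn frame Y := by
    have hcoord (i : Fin 2) : ContinuousOn (fun y : ℝ² => y i) Y := by fun_prop
    have hdiv (i : Fin 2) : ContinuousOn (fun y : ℝ² => y i / ‖y‖ ^ 2) Y :=
      (hcoord i).div (by fun_prop) hY0
    refine continuousOn_pi.2 fun i => continuousOn_pi.2 fun k => ?_
    fin_cases i <;> fin_cases k
    exacts [hcoord 0, (hdiv 1).neg, hcoord 1, hdiv 0]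
  have hdet : ∀ y ∈ Y, (frame y).det = 1 := fun y hy => by
    rw [Matrix.det_fin_two_of, neg_mul, sub_neg_eq_add]
    rw [div_mul_eq_mul_div, mul_div_assoc', ← add_div, ← sq, ← sq,
      ← Fin.sum_univ_two (fun i => y i ^ 2), ← EuclideanSpace.real_norm_sq_eq,
      div_self (hY0 y hy)]
  have happly (y : ℝ²) :
      Matrix.toEuclideanLin (frame y) (EuclideanSpace.single 0 1) = y := by
    ext i
    fin_cases i <;> simp [frame, Matrix.toLpLin_apply]
  refine ⟨Subtype.val ⁻¹' (frame '' Y),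
    Matrix.SpecialLinearGroup.isClosedEmbedding_val.isCompact_preimage
      (hY.image_of_continuousOn hcont), fun y hy => ?_⟩
  let m : SL₂ := ⟨frame y, hdet y hy⟩
  exact ⟨m, ⟨y, hy, rfl⟩, (toEuclideanLin_coe_apply m _).symm.trans (happly y)⟩

theorem exists_isCompact_forall_smul_eq {Y : Set ℝ²} (hY : IsCompact Y) (h0 : 0 ∉ Y) :
    ∃ L : Set SL₂, IsCompact L ∧ ∀ u ∈ Y, ∀ y ∈ Y, ∃ h ∈ L, h • u = y := by
  obtain ⟨T, hT, hTY⟩ := exists_isCompact_forall_smul_single_eq hY h0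
  refine ⟨T * T⁻¹, hT.mul hT.inv, fun u hu y hy => ?_⟩
  obtain ⟨m, hm, rfl⟩ := hTY u hu
  obtain ⟨n, hn, rfl⟩ := hTY y hy
  exact ⟨n * m⁻¹, Set.mul_mem_mul hn (Set.inv_mem_inv.2 hm), by rw [mul_smul, inv_smul_smul]⟩

theorem exists_isCompact_forall_mem_closedBall_smul_eq :
    ∃ L : Set SL₂, IsCompact L ∧
      ∀ x : ℝ², x ≠ 0 → ∀ y ∈ closedBall x (‖x‖ / 2), ∃ h ∈ L, h • x = y := by
  have hcompact : IsCompact (closedBall (0 : ℝ²) 2 \ ball 0 (1 / 2)) :=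
    (isCompact_closedBall 0 2).diff isOpen_ball
  obtain ⟨L, hL, htrans⟩ := exists_isCompact_forall_smul_eq hcompact (by simp)
  refine ⟨L, hL, fun x hx y hy => ?_⟩
  have hnorm : 0 < ‖x‖ := norm_pos_iff.2 hx
  have hmem : ∀ z ∈ closedBall x (‖x‖ / 2),
      ‖x‖⁻¹ • z ∈ closedBall (0 : ℝ²) 2 \ ball 0 (1 / 2) := fun z hz => by
    have hz_abs := abs_le.1 ((abs_norm_sub_norm_le z x).trans (mem_closedBall_iff_norm.1 hz))
    rw [Set.mem_sdiff, mem_closedBall_zero_iff, mem_ball_zero_iff, norm_smul, norm_inv, norm_norm,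
      not_lt, inv_mul_le_iff₀ hnorm, le_inv_mul_iff₀ hnorm]
    constructor <;> linarith
  obtain ⟨h, hh, heq⟩ := htrans _ (hmem x (mem_closedBall_self (by positivity))) _ (hmem y hy)
  rw [smul_comm] at heq
  exact ⟨h, hh, smul_right_injective _ (inv_ne_zero hnorm.ne') heq⟩

variable (lam : Measure SL₂) [IsFiniteMeasureOnCompacts lam] [lam.IsMulRightInvariant]

theorem exists_map_smul_restrict_le {K : Set SL₂} (hK : IsCompact K) :
    ∃ C : ℝ≥0, ∀ η : ℝ², η ≠ 0 →
      (lam.restrict K).map (· • η) ≤ (C / ‖η‖ₑ ^ 2) • (volume : Measure ℝ²) := by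
  obtain ⟨L, hL, htrans⟩ := exists_isCompact_forall_mem_closedBall_smul_eq
  set ω := volume (closedBall (0 : ℝ²) (1 / 2))
  have hω : ω ≠ 0 := (measure_closedBall_pos _ _ (by norm_num)).ne'
  have hω_top : ω ≠ ∞ := measure_closedBall_lt_top.ne
  have hKL : lam (K * L⁻¹) ≠ ∞ := (hK.mul hL.inv).measure_lt_top.ne
  refine ⟨(lam (K * L⁻¹) / ω).toNNReal, fun η hη => Measure.le_iff'.2 fun s => ?_⟩
  have hη_zero : ‖η‖ₑ ^ 2 ≠ 0 := by simpa using hη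
  have hη_top : ‖η‖ₑ ^ 2 ≠ ∞ := by simp
  have hvol : volume (closedBall η (‖η‖ / 2)) = ‖η‖ₑ ^ 2 * ω := by
    rw [← mul_one_div, Measure.addHaar_closedBall_mul _ _ (norm_nonneg η) (by norm_num),
      finrank_euclideanSpace_fin, ENNReal.ofReal_pow (norm_nonneg η), ofReal_norm]
  have havg := measure_smul_map_smul_restrict_le (lam := lam) (ν := volume) (K := K)
    (htrans η hη) s
  simp only [Measure.smul_apply, smul_eq_mul, hvol] at havg ⊢
  rw [ENNReal.coe_toNNReal (ENNReal.div_ne_top hKL hω), ← ENNReal.mul_div_right_comm,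
    ← ENNReal.mul_div_right_comm, ENNReal.le_div_iff_mul_le (.inl hη_zero) (.inl hη_top),
    ENNReal.le_div_iff_mul_le (.inl hω) (.inl hω_top)]
  rwa [mul_assoc, mul_comm]

theorem exists_lintegral_annulus_mul_comp_smul_le {K : Set SL₂} (hK : IsCompact K) :
    ∃ (c : ℝ) (C : ℝ≥0), 0 < c ∧ ∀ R : ℝ, 0 < R → ∀ a b : ℝ² → ℝ≥0∞, Measurable a →
      Measurable b →
      ∫⁻ ξ in {ξ : ℝ² | R ≤ ‖ξ‖ ∧ ‖ξ‖ ≤ 2 * R}, ∫⁻ η in {η : ℝ² | R ≤ ‖η‖ ∧ ‖η‖ ≤ 2 * R},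
          ∫⁻ g in K, (a ξ * a (g • ξ)) * (b η * b (g • η)) ∂lam ≤
        C * ENNReal.ofReal (R ^ (-2 : ℝ)) * (∫⁻ ξ in closedBall 0 (c * R), a ξ ^ 2) *
          (∫⁻ η in closedBall 0 (c * R), b η) ^ 2 := by
  obtain ⟨c, hc, hnorm⟩ := exists_forall_norm_smul_le (V := ℝ²) hK
  obtain ⟨C, hC⟩ := exists_map_smul_restrict_le lam hK
  refine ⟨2 * c, C, by positivity, fun R hR a b ha hb => ?_⟩
  have hsub : {ξ : ℝ² | R ≤ ‖ξ‖ ∧ ‖ξ‖ ≤ 2 * R} ⊆ closedBall 0 (2 * c * R) := fun ξ hξ =>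
    mem_closedBall_zero_iff.2 (by nlinarith [hξ.2])
  have hmaps : ∀ g ∈ K, Set.MapsTo (g • ·) {ξ : ℝ² | R ≤ ‖ξ‖ ∧ ‖ξ‖ ≤ 2 * R}
      (closedBall 0 (2 * c * R)) := fun g hg ξ hξ =>
    mem_closedBall_zero_iff.2 ((hnorm g hg ξ).trans (by nlinarith [hξ.2]))
  refine lintegral_lintegral_lintegral_mul_comp_smul_le ha hb
    (isClosed_le continuous_const continuous_norm |>.inter <|
      isClosed_le continuous_norm continuous_const).measurableSet
    measurableSet_closedBall hK.measurableSet hsub hmaps fun η hη => ?_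
  have hη0 : η ≠ 0 := norm_pos_iff.1 (hR.trans_le hη.1)
  refine (hC η hη0).trans ?_
  gcongr
  rw [ENNReal.div_eq_inv_mul, mul_comm, Real.rpow_neg hR.le,
    ENNReal.ofReal_inv_of_pos (by positivity), Real.rpow_two, ENNReal.ofReal_pow hR.le,
    ← ofReal_norm]
  gcongr
  exact hη.1

end SpecialLinear

section Estimate

theorem lintegral_mul_ofReal_le {G : Type*} [TopologicalSpace G] [MeasurableSpace G]
    [OpensMeasurableSpace G] (lam : Measure G) (f : G → ℝ≥0∞) {ψ : G → ℝ} {M : ℝ}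
    (hM : ∀ g, ψ g ≤ M) :
    ∫⁻ g, f g * ENNReal.ofReal (ψ g) ∂lam ≤ ENNReal.ofReal M * ∫⁻ g in tsupport ψ, f g ∂lam := by
  have hsupport : (Function.support fun g => f g * ENNReal.ofReal (ψ g)) ⊆ tsupport ψ := by
    refine fun g hg => by_contra fun hgψ => hg ?_
    simp only [image_eq_zero_of_notMem_tsupport hgψ, ENNReal.ofReal_zero, mul_zero]
  calc ∫⁻ g, f g * ENNReal.ofReal (ψ g) ∂lam
      = ∫⁻ g in tsupport ψ, f g * ENNReal.ofReal (ψ g) ∂lam :=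
        (setLIntegral_eq_of_support_subset hsupport).symm
    _ ≤ ∫⁻ g in tsupport ψ, ENNReal.ofReal M * f g ∂lam :=
        lintegral_mono fun g => by
          rw [mul_comm]
          gcongr
          exact hM g
    _ = _ := lintegral_const_mul' _ _ ENNReal.ofReal_ne_top

variable {ψ : SL₂ → ℝ} (lam : Measure SL₂) [IsFiniteMeasureOnCompacts lam]
  [lam.IsMulRightInvariant]

theorem exists_lintegral_annulus_mul_lintegral_comp_smul_le (hψ : BddAbove (Set.range ψ))
    (hψc : HasCompactSupport ψ) :
    ∃ (c : ℝ) (C : ℝ≥0), 0 < c ∧ ∀ R : ℝ, 0 < R → ∀ a b : ℝ² → ℝ≥0∞, Measurable a →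
      Measurable b → (∀ ξ, a ξ ≠ ∞) → (∀ η, b η ≠ ∞) →
      ∫⁻ ξ in {ξ : ℝ² | R ≤ ‖ξ‖ ∧ ‖ξ‖ ≤ 2 * R}, ∫⁻ η in {η : ℝ² | R ≤ ‖η‖ ∧ ‖η‖ ≤ 2 * R},
          a ξ * b η * ∫⁻ g, a (g • ξ) * b (g • η) * ENNReal.ofReal (ψ g) ∂lam ≤
        C * ENNReal.ofReal (R ^ (-2 : ℝ)) * (∫⁻ ξ in closedBall 0 (c * R), a ξ ^ 2) *
          (∫⁻ η in closedBall 0 (c * R), b η) ^ 2 := by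
  obtain ⟨M, hM⟩ := hψ
  obtain ⟨c, C, hc, hC⟩ := exists_lintegral_annulus_mul_comp_smul_le lam hψc
  refine ⟨c, M.toNNReal * C, hc, fun R hR a b ha hb ha_top hb_top => ?_⟩
  have hcutoff (ξ η : ℝ²) :
      a ξ * b η * ∫⁻ g, a (g • ξ) * b (g • η) * ENNReal.ofReal (ψ g) ∂lam ≤
        ENNReal.ofReal M *
          ∫⁻ g in tsupport ψ, (a ξ * a (g • ξ)) * (b η * b (g • η)) ∂lam := by
    calc _ ≤ a ξ * b η *
            (ENNReal.ofReal M * ∫⁻ g in tsupport ψ, a (g • ξ) * b (g • η) ∂lam) := by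
          gcongr
          exact lintegral_mul_ofReal_le lam _ (Set.forall_mem_range.1 hM)
      _ = _ := by
          rw [mul_left_comm, ← lintegral_const_mul' _ _ (ENNReal.mul_ne_top (ha_top ξ) (hb_top η))]
          simp only [mul_mul_mul_comm]
  calc _ ≤ ∫⁻ ξ in {ξ : ℝ² | R ≤ ‖ξ‖ ∧ ‖ξ‖ ≤ 2 * R},
        ∫⁻ η in {η : ℝ² | R ≤ ‖η‖ ∧ ‖η‖ ≤ 2 * R}, ENNReal.ofReal M *
          ∫⁻ g in tsupport ψ, (a ξ * a (g • ξ)) * (b η * b (g • η)) ∂lam :=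
        lintegral_mono fun ξ => lintegral_mono fun η => hcutoff ξ η
    _ ≤ ENNReal.ofReal M *
          (C * ENNReal.ofReal (R ^ (-2 : ℝ)) * (∫⁻ ξ in closedBall 0 (c * R), a ξ ^ 2) *
            (∫⁻ η in closedBall 0 (c * R), b η) ^ 2) := by
        simp only [lintegral_const_mul' _ _ ENNReal.ofReal_ne_top]
        gcongr
        exact hC R hR a b ha hb
    _ = _ := by
        rw [ENNReal.coe_mul, ← ENNReal.ofReal]
        ring

theorem sl2_dyadic_annulus_estimate_general {sE sF sH : ℝ} {μE μF μH : Measure ℝ²}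
    [IsFiniteMeasure μE] [IsFiniteMeasure μF] [IsFiniteMeasure μH] (hE : IsFrostman sE μE)
    (hF : IsFrostman sF μF) (hH : IsFrostman sH μH) (hψ : BddAbove (Set.range ψ))
    (hψc : HasCompactSupport ψ) :
    ∃ C : ℝ, 0 < C ∧ ∀ R : ℝ, 0 < R →
      ∫⁻ ξ in {ξ : ℝ² | R ≤ ‖ξ‖ ∧ ‖ξ‖ ≤ 2 * R}, ∫⁻ η in {η : ℝ² | R ≤ ‖η‖ ∧ ‖η‖ ≤ 2 * R},
          ‖measureFT μE ξ‖ₑ * ‖measureFT μF η‖ₑ * ‖measureFT μH η‖ₑ *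
            ∫⁻ g, ‖measureFT μE (g • ξ)‖ₑ * ‖measureFT μF (g • η)‖ₑ * ‖measureFT μH (g • η)‖ₑ *
              ENNReal.ofReal (ψ g) ∂lam ≤
        ENNReal.ofReal (C * R ^ (4 - sE - sF - sH)) := by
  obtain ⟨c, C, hc, hC⟩ := exists_lintegral_annulus_mul_lintegral_comp_smul_le lam hψ hψc
  obtain ⟨A, hA⟩ := hE.exists_lintegral_closedBall_enorm_measureFT_sq_le hc
  obtain ⟨B, hB⟩ := hF.exists_sq_lintegral_closedBall_enorm_measureFT_mul_le hH hc
  refine ⟨(C * A * B : ℝ≥0) + 1, by positivity, fun R hR => ?_⟩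
  have hpow : ENNReal.ofReal (R ^ (4 - sE - sF - sH)) = ENNReal.ofReal (R ^ (-2 : ℝ)) *
      ENNReal.ofReal (R ^ (2 - sE)) * ENNReal.ofReal (R ^ (4 - sF - sH)) := by
    rw [← ENNReal.ofReal_mul (by positivity), ← ENNReal.ofReal_mul (by positivity),
      ← Real.rpow_add hR, ← Real.rpow_add hR]
    ring_nf
  have hsplit := hC R hR (fun ξ => ‖measureFT μE ξ‖ₑ)
    (fun η => ‖measureFT μF η‖ₑ * ‖measureFT μH η‖ₑ) (measurable_measureFT μE).enorm
    ((measurable_measureFT μF).enorm.mul (measurable_measureFT μH).enorm)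
    (fun _ => enorm_ne_top) (fun _ => ENNReal.mul_ne_top enorm_ne_top enorm_ne_top)
  simp only [← mul_assoc] at hsplit
  calc _ ≤ C * ENNReal.ofReal (R ^ (-2 : ℝ)) * (A * ENNReal.ofReal (R ^ (2 - sE))) *
        (B * ENNReal.ofReal (R ^ (4 - sF - sH))) :=
        hsplit.trans (by gcongr; exacts [hA R hR, hB R hR])
    _ = (C * A * B : ℝ≥0) * ENNReal.ofReal (R ^ (4 - sE - sF - sH)) := by
        rw [hpow]
        push_cast
        ring
    _ ≤ _ := by
        rw [← ENNReal.ofReal_coe_nnreal, ← ENNReal.ofReal_mul (NNReal.coe_nonneg _)]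
        gcongr
        exact le_add_of_nonneg_right zero_le_one

end Estimate

/-- **Dyadic annulus estimate** in the proof of the planar sum-product theorem
(Theorem 1.5 of "Group actions, the Mattila integral and applications"): for Frostman
probability measures `μ_E, μ_F, μ_H` on `ℝ²` with exponents `s_E, s_F, s_H`, a
nonnegative continuous compactly supported `ψ` on `SL₂(ℝ)` and a right Haar measure `λ`,
`∬_{2^j ≤ |ξ|,|η| ≤ 2^{j+1}} |μ̂_E(ξ)| |μ̂_F(η)| |μ̂_H(η)|
  (∫_{SL₂(ℝ)} |μ̂_E(gξ)| |μ̂_F(gη)| |μ̂_H(gη)| ψ(g) dλ(g)) dξ dη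
  ≤ C 2^{j(4 - s_E - s_F - s_H)}` for all `j ≥ 0`. -/
theorem sl2_dyadic_annulus_estimate
    (sE sF sH A : ℝ) (hsE : 0 < sE) (hsE2 : sE ≤ 2) (hsF : 0 < sF) (hsF2 : sF ≤ 2)
    (hsH : 0 < sH) (hsH2 : sH ≤ 2) (hA : 0 < A)
    (μE μF μH : Measure (EuclideanSpace ℝ (Fin 2)))
    [IsProbabilityMeasure μE] [IsProbabilityMeasure μF] [IsProbabilityMeasure μH]
    (hEc : ∃ K, IsCompact K ∧ μE Kᶜ = 0)
    (hFc : ∃ K, IsCompact K ∧ μF Kᶜ = 0)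
    (hHc : ∃ K, IsCompact K ∧ μH Kᶜ = 0)
    (hfrostE : ∀ (x : EuclideanSpace ℝ (Fin 2)) (r : ℝ), 0 < r →
      μE (closedBall x r) ≤ ENNReal.ofReal (A * r ^ sE))
    (hfrostF : ∀ (x : EuclideanSpace ℝ (Fin 2)) (r : ℝ), 0 < r →
      μF (closedBall x r) ≤ ENNReal.ofReal (A * r ^ sF))
    (hfrostH : ∀ (x : EuclideanSpace ℝ (Fin 2)) (r : ℝ), 0 < r →
      μH (closedBall x r) ≤ ENNReal.ofReal (A * r ^ sH))
    (ψ : Matrix.SpecialLinearGroup (Fin 2) ℝ → ℝ) (hψ0 : ∀ g, 0 ≤ ψ g)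
    (hψ : Continuous ψ) (hψc : HasCompactSupport ψ)
    (lam : Measure (Matrix.SpecialLinearGroup (Fin 2) ℝ)) (hlam0 : lam ≠ 0)
    (hlamfin : IsFiniteMeasureOnCompacts lam)
    (hinv : ∀ g₀ : Matrix.SpecialLinearGroup (Fin 2) ℝ,
      lam.map (fun g => g * g₀) = lam) :
    ∃ C : ℝ, 0 < C ∧ ∀ j : ℕ,
      ∫⁻ ξ in {ξ : EuclideanSpace ℝ (Fin 2) | (2 : ℝ) ^ j ≤ ‖ξ‖ ∧ ‖ξ‖ ≤ 2 ^ (j + 1)},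
        ∫⁻ η in {η : EuclideanSpace ℝ (Fin 2) | (2 : ℝ) ^ j ≤ ‖η‖ ∧ ‖η‖ ≤ 2 ^ (j + 1)},
          (‖measureFT μE ξ‖₊ : ℝ≥0∞) * (‖measureFT μF η‖₊ : ℝ≥0∞)
            * (‖measureFT μH η‖₊ : ℝ≥0∞)
          * ∫⁻ g, (‖measureFT μE (Matrix.toEuclideanLin ((g : Matrix (Fin 2) (Fin 2) ℝ)) ξ)‖₊ : ℝ≥0∞)
              * (‖measureFT μF (Matrix.toEuclideanLin ((g : Matrix (Fin 2) (Fin 2) ℝ)) η)‖₊ : ℝ≥0∞)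
              * (‖measureFT μH (Matrix.toEuclideanLin ((g : Matrix (Fin 2) (Fin 2) ℝ)) η)‖₊ : ℝ≥0∞)
              * ENNReal.ofReal (ψ g) ∂lam
        ≤ ENNReal.ofReal (C * 2 ^ ((j : ℝ) * (4 - sE - sF - sH))) := by
  have : lam.IsMulRightInvariant := ⟨hinv⟩
  obtain ⟨C, hC, h⟩ := sl2_dyadic_annulus_estimate_general lam (isFrostman_of_le_ofReal hfrostE)
    (isFrostman_of_le_ofReal hfrostF) (isFrostman_of_le_ofReal hfrostH)
    (hψ.bddAbove_range_of_hasCompactSupport hψc) hψc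
  refine ⟨C, hC, fun j => ?_⟩
  simpa only [pow_succ', Real.rpow_mul two_pos.le, Real.rpow_natCast, toEuclideanLin_coe_apply,
    enorm_eq_nnnorm] using h (2 ^ j) (by positivity)
end
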